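/- Assume: (O1) a_{ij}(ω) ≥ 0 for all i ≠ j and all ω; (O2) ω ↦ max_{i,j} a_{ij}(ω) ∈ L₁(ℙ); and the focusing conditions: there exist e, e* ∈ X⁺ with ‖e‖ = ‖e*‖ = 1 and measurable κ, κ* : Ω → [1, ∞) with ln⁺ln κ and ln⁺ln κ* in L₁(ℙ) such that for every ω ∈ Ω and every u ∈ X⁺ ∖ {0} there are β(ω,u) > 0 and β*(ω,u) > 0 with β(ω,u)·e ≤ U_ω(1)u ≤ κ(ω)β(ω,u)·e and β*(ω,u)·e* ≤ (U_{θ_{−1}ω}(1))ᵀ u ≤ κ*(ω)β*(ω,u)·e* componentwise. Then there exist a (θ_t)-invariant set Ω̃₁ ∈ 𝔉 with ℙ(Ω̃₁) = 1 and a measurable map w : Ω̃₁ → X⁺ ∖ {0} with ‖w(ω)‖ = 1 such that: (i) U_ω(t)w(ω) = ‖U_ω(t)w(ω)‖·w(θ_t ω) for all ω ∈ Ω̃₁ and t ≥ 0; (ii) the generalized principal Lyapunov exponent satisfies λ̃₁ = ∫_Ω ⟨A(ω)w(ω), w(ω)⟩ dℙ(ω) ∈ [−∞, ∞), that is, lim_{t→∞}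 (1/t) ln‖U_ω(t)w(ω)‖ = ∫_Ω w(ω)ᵀA(ω)w(ω) dℙ(ω) for every ω ∈ Ω̃₁; (iii) limsup_{t→∞} (1/t) ln‖U_ω(t)u‖ ≤ λ̃₁ for every ω ∈ Ω̃₁ and every u ∈ ℝᴺ ∖ {0}. -/

import Mathlib

open MeasureTheory Matrix Filter

/-- `ln⁺ x = max (ln x) 0` (with `Real.log 0 = 0`, so `ln⁺ 0 = 0`). -/
noncomputable def lnplus (x : ℝ) : ℝ := max (Real.log x) 0

/-- The Euclidean norm on `Fin N → ℝ`. -/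
noncomputable def enorm' {N : ℕ} (u : Fin N → ℝ) : ℝ := Real.sqrt (∑ i, (u i) ^ 2)

/-- The operator norm of a matrix with respect to the Euclidean norm. -/
noncomputable def eopNorm {N : ℕ} (M : Matrix (Fin N) (Fin N) ℝ) : ℝ :=
  sSup {c : ℝ | ∃ u : Fin N → ℝ, enorm' u ≤ 1 ∧ c = enorm' (M.mulVec u)}

/-!
Call a solution entire if it is nonnegative at all times, past and future. Almost surely
`κ (θ (-n) ω)` returns below a fixed level for infinitely many `n`, and focusing across these
recurrence times gives a Harnack inequality between any two entire solutions. Hence they are all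
proportional, and the directions of the solutions started at time `-n` from a fixed positive vector
can only accumulate at the unit vector `w ω` which spans them. So `w` is a measurable limit, and it
is equivariant.

The norm of `U ω t *ᵥ w ω` solves the scalar equation `r' = ⟨A w, w⟩ (θ t ω) r`, so its logarithm is
an integral along the orbit, and the ergodic theorem for functions with integrable positive part
gives its growth rate. No solution grows faster: by cooperativity the solution from `u` is dominated
by that from `|u|`, and by focusing the latter is, from time `1` on, dominated by a multiple of
`U ω t *ᵥ w ω`.
-/

open scoped Topology

/-! ### Indefinite integrals of locally integrable functions -/

/-- `φ` is an indefinite integral of the locally integrable function `φ'`: the scalar form of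
the integral equations that define Carathéodory solutions. -/
structure IsIndefiniteIntegral (φ φ' : ℝ → ℝ) : Prop where
  intervalIntegrable : ∀ a b, IntervalIntegrable φ' volume a b
  eq_add_integral : ∀ t, φ t = φ 0 + ∫ s in (0 : ℝ)..t, φ' s

theorem locallyIntegrable_of_intervalIntegrable {f : ℝ → ℝ}
    (hf : ∀ a b, IntervalIntegrable f volume a b) : LocallyIntegrable f := fun x =>
  ⟨Set.Icc (x - 1) (x + 1), Icc_mem_nhds (by linarith) (by linarith),
    (intervalIntegrable_iff_integrableOn_Icc_of_le (by linarith)).1 (hf _ _)⟩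

theorem absolutelyContinuousOnInterval_comp_of_lipschitzOnWith {X Y : Type*}
    [PseudoMetricSpace X] [PseudoMetricSpace Y] {f : X → Y} {s : Set X} {K : NNReal}
    (hf : LipschitzOnWith K f s) {φ : ℝ → X} {a b : ℝ}
    (hφ : AbsolutelyContinuousOnInterval φ a b) (hφs : Set.MapsTo φ (Set.uIcc a b) s) :
    AbsolutelyContinuousOnInterval (fun t => f (φ t)) a b := by
  rw [absolutelyContinuousOnInterval_iff] at hφ ⊢
  intro ε hε
  obtain ⟨δ, hδ, hsmall⟩ := hφ (ε / (K + 1)) (by positivity)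
  refine ⟨δ, hδ, fun E hE hlt => ?_⟩
  have hE' := (lt_div_iff₀ (by positivity)).1 (hsmall E hE hlt)
  refine lt_of_le_of_lt ?_ hE'
  rw [mul_comm, Finset.mul_sum]
  refine Finset.sum_le_sum fun i hi => ?_
  have hmem := hE.1 i hi
  calc dist (f (φ (E.2 i).1)) (f (φ (E.2 i).2))
      ≤ K * dist (φ (E.2 i).1) (φ (E.2 i).2) :=
        hf.dist_le_mul _ (hφs hmem.1) _ (hφs hmem.2)
    _ ≤ (K + 1) * dist (φ (E.2 i).1) (φ (E.2 i).2) := by gcongr; linarith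

namespace IsIndefiniteIntegral

variable {φ φ' ψ ψ' : ℝ → ℝ}

theorem integral_zero (h : ∀ a b, IntervalIntegrable φ' volume a b) :
    IsIndefiniteIntegral (fun t => ∫ s in (0 : ℝ)..t, φ' s) φ' :=
  ⟨h, fun t => by simp⟩

theorem integral_eq_sub (h : IsIndefiniteIntegral φ φ') (a b : ℝ) :
    ∫ s in a..b, φ' s = φ b - φ a := by
  rw [h.eq_add_integral a, h.eq_add_integral b, add_sub_add_left_eq_sub,
    intervalIntegral.integral_interval_sub_left (h.intervalIntegrable 0 b)
      (h.intervalIntegrable 0 a)]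

theorem continuous (h : IsIndefiniteIntegral φ φ') : Continuous φ := by
  rw [funext h.eq_add_integral]
  exact continuous_const.add (intervalIntegral.continuous_primitive h.intervalIntegrable 0)

theorem absolutelyContinuousOnInterval (h : IsIndefiniteIntegral φ φ') (a b : ℝ) :
    AbsolutelyContinuousOnInterval φ a b := by
  have hconst : AbsolutelyContinuousOnInterval (fun _ : ℝ => φ a) a b :=
    (LipschitzWith.const (φ a)).lipschitzOnWith.absolutelyContinuousOnInterval
  have hint := (h.intervalIntegrable a b).absolutelyContinuousOnInterval_intervalIntegral
    (c := a) Set.left_mem_uIcc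
  have hφ : φ = fun x => φ a + ∫ s in a..x, φ' s := by
    funext x
    rw [h.integral_eq_sub, add_sub_cancel]
  rw [hφ]
  exact hconst.fun_add hint

theorem ae_hasDerivAt (h : IsIndefiniteIntegral φ φ') : ∀ᵐ t, HasDerivAt φ (φ' t) t := by
  filter_upwards [LocallyIntegrable.ae_hasDerivAt_integral
    (locallyIntegrable_of_intervalIntegrable h.intervalIntegrable)] with t ht
  rw [funext h.eq_add_integral]
  exact (ht 0).const_add (φ 0)

theorem of_absolutelyContinuousOnInterval (hφ : ∀ a b, AbsolutelyContinuousOnInterval φ a b)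
    (hφ' : ∀ᵐ t, HasDerivAt φ (φ' t) t) : IsIndefiniteIntegral φ φ' := by
  have hderiv : deriv φ =ᵐ[volume] φ' := hφ'.mono fun t ht => ht.deriv
  refine ⟨fun a b => (hφ a b).intervalIntegrable_deriv.congr_ae (ae_restrict_of_ae hderiv),
    fun t => ?_⟩
  rw [← intervalIntegral.integral_congr_ae (hderiv.mono fun s hs _ => hs),
    (hφ 0 t).integral_deriv_eq_sub, add_sub_cancel]

theorem const (c : ℝ) : IsIndefiniteIntegral (fun _ => c) (fun _ => 0) :=
  ⟨fun _ _ => intervalIntegrable_const, fun t => by simp⟩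

theorem add (h : IsIndefiniteIntegral φ φ') (g : IsIndefiniteIntegral ψ ψ') :
    IsIndefiniteIntegral (fun t => φ t + ψ t) (fun t => φ' t + ψ' t) := by
  refine of_absolutelyContinuousOnInterval (fun a b =>
    (h.absolutelyContinuousOnInterval a b).fun_add (g.absolutelyContinuousOnInterval a b)) ?_
  filter_upwards [h.ae_hasDerivAt, g.ae_hasDerivAt] with t ht gt using ht.add gt

theorem mul (h : IsIndefiniteIntegral φ φ') (g : IsIndefiniteIntegral ψ ψ') :
    IsIndefiniteIntegral (fun t => φ t * ψ t) (fun t => φ' t * ψ t + φ t * ψ' t) := by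
  refine of_absolutelyContinuousOnInterval (fun a b =>
    (h.absolutelyContinuousOnInterval a b).fun_mul (g.absolutelyContinuousOnInterval a b)) ?_
  filter_upwards [h.ae_hasDerivAt, g.ae_hasDerivAt] with t ht gt using ht.mul gt

theorem const_mul (c : ℝ) (h : IsIndefiniteIntegral φ φ') :
    IsIndefiniteIntegral (fun t => c * φ t) (fun t => c * φ' t) := by
  simpa only [zero_mul, zero_add] using (const c).mul h

theorem sum {ι : Type*} (s : Finset ι) {φ φ' : ι → ℝ → ℝ}
    (h : ∀ i ∈ s, IsIndefiniteIntegral (φ i) (φ' i)) :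
    IsIndefiniteIntegral (fun t => ∑ i ∈ s, φ i t) (fun t => ∑ i ∈ s, φ' i t) := by
  classical
  induction s using Finset.induction_on with
  | empty => simpa only [Finset.sum_empty] using const 0
  | insert a s ha ih =>
    simp only [Finset.sum_insert ha]
    exact (h a (Finset.mem_insert_self a s)).add
      (ih fun i hi => h i (Finset.mem_insert_of_mem hi))

theorem comp_add_right (h : IsIndefiniteIntegral φ φ') (r : ℝ) :
    IsIndefiniteIntegral (fun t => φ (t + r)) (fun t => φ' (t + r)) where
  intervalIntegrable a b := by
    simpa using (h.intervalIntegrable (a + r) (b + r)).comp_add_right r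
  eq_add_integral t := by
    rw [intervalIntegral.integral_comp_add_right (fun s => φ' s) r, h.integral_eq_sub]
    ring

theorem comp_neg (h : IsIndefiniteIntegral φ φ') :
    IsIndefiniteIntegral (fun t => φ (-t)) (fun t => -φ' (-t)) where
  intervalIntegrable a b := by
    have hcomp : IntervalIntegrable (fun t => φ' (-t)) volume a b := by
      simpa using (h.intervalIntegrable (-a) (-b)).comp_sub_left 0
    exact hcomp.neg
  eq_add_integral t := by
    rw [intervalIntegral.integral_neg, intervalIntegral.integral_comp_neg, h.integral_eq_sub]
    simp

theorem comp {f : ℝ → ℝ} (hf : ContDiff ℝ 1 f) (h : IsIndefiniteIntegral φ φ') :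
    IsIndefiniteIntegral (fun t => f (φ t)) (fun t => deriv f (φ t) * φ' t) := by
  refine of_absolutelyContinuousOnInterval (fun a b => ?_) ?_
  · have hφ := h.absolutelyContinuousOnInterval a b
    obtain ⟨C, hC⟩ := hφ.exists_bound
    obtain ⟨K, hK⟩ := hf.contDiffOn.exists_lipschitzOnWith one_ne_zero
      (convex_closedBall (0 : ℝ) C) (isCompact_closedBall 0 C)
    exact absolutelyContinuousOnInterval_comp_of_lipschitzOnWith hK hφ
      fun t ht => by simpa using hC t ht
  · filter_upwards [h.ae_hasDerivAt] with t ht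
    exact ((hf.differentiable one_ne_zero _).hasDerivAt).comp t ht

theorem exp (h : IsIndefiniteIntegral φ φ') :
    IsIndefiniteIntegral (fun t => Real.exp (φ t)) (fun t => Real.exp (φ t) * φ' t) := by
  simpa only [Real.deriv_exp] using h.comp Real.contDiff_exp

theorem pow_div_factorial (h : IsIndefiniteIntegral φ φ') (k : ℕ) :
    IsIndefiniteIntegral (fun t => φ t ^ (k + 1) / (k + 1).factorial)
      (fun t => φ t ^ k / k.factorial * φ' t) := by
  have hderiv (x : ℝ) : deriv (fun y : ℝ => y ^ (k + 1) / (k + 1).factorial) x =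
      x ^ k / k.factorial := by
    rw [deriv_div_const, deriv_pow_field, Nat.factorial_succ]
    push_cast
    have := k.factorial_ne_zero
    field_simp
  simpa only [hderiv] using h.comp (f := fun y : ℝ => y ^ (k + 1) / (k + 1).factorial)
    (by fun_prop)

theorem eq_mul_exp {q : ℝ → ℝ} (hq : ∀ a b, IntervalIntegrable q volume a b)
    (h : IsIndefiniteIntegral φ (fun t => q t * φ t)) (t : ℝ) :
    φ t = φ 0 * Real.exp (∫ s in (0 : ℝ)..t, q s) := by
  have hprod := ((integral_zero hq).const_mul (-1)).exp.mul h
  have hconst := hprod.eq_add_integral t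
  have hzero (s : ℝ) : Real.exp (-1 * ∫ r in (0 : ℝ)..s, q r) * (-1 * q s) * φ s +
      Real.exp (-1 * ∫ r in (0 : ℝ)..s, q r) * (q s * φ s) = 0 := by ring
  simp only [hzero, intervalIntegral.integral_same, intervalIntegral.integral_zero, mul_zero,
    Real.exp_zero, one_mul, add_zero] at hconst
  rwa [neg_one_mul, Real.exp_neg, inv_mul_eq_iff_eq_mul₀ (Real.exp_pos _).ne', mul_comm] at hconst

end IsIndefiniteIntegral

/-! ### Linear Carathéodory systems -/

local notation "‖" v "‖₂" => ‖WithLp.toLp 2 v‖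

section LinearSystem

variable {ι : Type*}

/-- The entries of a matrix-valued function of time are locally integrable. -/
def IsLocallyIntegrableMatrix (B : ℝ → Matrix ι ι ℝ) : Prop :=
  ∀ i j a b, IntervalIntegrable (fun t => B t i j) volume a b

theorem IsLocallyIntegrableMatrix.neg_comp_neg {B : ℝ → Matrix ι ι ℝ}
    (hB : IsLocallyIntegrableMatrix B) : IsLocallyIntegrableMatrix fun t => -B (-t) :=
  fun i j => (IsIndefiniteIntegral.integral_zero (hB i j)).comp_neg.intervalIntegrable

variable [Fintype ι]

/-- The sum of the absolute values of the entries, a matrix norm dominating every operator norm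
used below. -/
def absEntrySum (M : Matrix ι ι ℝ) : ℝ := ∑ i, ∑ j, |M i j|

/-- `u` is a Carathéodory solution of the linear system `u' = B(t) u`. -/
def IsCaratheodorySolution (B : ℝ → Matrix ι ι ℝ) (u : ℝ → ι → ℝ) : Prop :=
  ∀ i, IsIndefiniteIntegral (fun t => u t i) (fun t => (B t *ᵥ u t) i)

/-- The Picard iterates of the linear system `u' = B(t) u` with initial value `u₀`. -/
noncomputable def picardIterate (B : ℝ → Matrix ι ι ℝ) (u₀ : ι → ℝ) : ℕ → ℝ → ι → ℝ
  | 0 => fun _ => u₀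
  | k + 1 => fun t i => u₀ i + ∫ s in (0 : ℝ)..t, (B s *ᵥ picardIterate B u₀ k s) i

theorem absEntrySum_nonneg (M : Matrix ι ι ℝ) : 0 ≤ absEntrySum M :=
  Finset.sum_nonneg fun _ _ => Finset.sum_nonneg fun _ _ => abs_nonneg _

theorem norm_toLp_sq (v : ι → ℝ) : ‖v‖₂ ^ 2 = ∑ i, v i ^ 2 :=
  EuclideanSpace.real_norm_sq_eq (WithLp.toLp 2 v)

theorem row_abs_sum_le_absEntrySum (M : Matrix ι ι ℝ) (i : ι) : ∑ j, |M i j| ≤ absEntrySum M :=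
  Finset.single_le_sum (f := fun i => ∑ j, |M i j|)
    (fun _ _ => Finset.sum_nonneg fun _ _ => abs_nonneg _) (Finset.mem_univ i)

theorem abs_apply_le_absEntrySum (M : Matrix ι ι ℝ) (i j : ι) : |M i j| ≤ absEntrySum M :=
  (Finset.single_le_sum (f := fun j => |M i j|) (fun _ _ => abs_nonneg _)
    (Finset.mem_univ j)).trans (row_abs_sum_le_absEntrySum M i)

theorem abs_mulVec_apply_le (M : Matrix ι ι ℝ) (v : ι → ℝ) (i : ι) :
    |(M *ᵥ v) i| ≤ absEntrySum M * ‖v‖ :=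
  calc |∑ j, M i j * v j| ≤ ∑ j, |M i j| * ‖v‖ := by
        refine (Finset.abs_sum_le_sum_abs _ _).trans (Finset.sum_le_sum fun j _ => ?_)
        rw [abs_mul]
        exact mul_le_mul_of_nonneg_left (norm_le_pi_norm v j) (abs_nonneg _)
    _ ≤ absEntrySum M * ‖v‖ := by
        rw [← Finset.sum_mul]
        exact mul_le_mul_of_nonneg_right (row_abs_sum_le_absEntrySum M i) (norm_nonneg v)

theorem abs_mulVec_dotProduct_self_le (M : Matrix ι ι ℝ) (v : ι → ℝ) :
    |(M *ᵥ v) ⬝ᵥ v| ≤ absEntrySum M * ‖v‖₂ ^ 2 := by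
  simp only [dotProduct, mulVec, absEntrySum, Finset.sum_mul]
  refine (Finset.abs_sum_le_sum_abs _ _).trans (Finset.sum_le_sum fun i _ =>
    (Finset.abs_sum_le_sum_abs _ _).trans (Finset.sum_le_sum fun j _ => ?_))
  have hle (i : ι) : |v i| ≤ ‖v‖₂ := PiLp.norm_apply_le (WithLp.toLp 2 v) i
  rw [abs_mul, abs_mul, mul_assoc, sq]
  gcongr <;> apply hle

namespace IsLocallyIntegrableMatrix

variable {B : ℝ → Matrix ι ι ℝ}

theorem absEntrySum (hB : IsLocallyIntegrableMatrix B) (a b : ℝ) :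
    IntervalIntegrable (fun t => absEntrySum (B t)) volume a b := by
  have hsum : (fun t => _root_.absEntrySum (B t)) = ∑ i, ∑ j, fun t => |B t i j| := by
    funext t
    simp only [_root_.absEntrySum, Finset.sum_apply]
  rw [hsum]
  exact .sum _ fun i _ => .sum _ fun j _ => (hB i j a b).abs

theorem mulVec (hB : IsLocallyIntegrableMatrix B) {u : ℝ → ι → ℝ} (hu : Continuous u)
    (i : ι) (a b : ℝ) : IntervalIntegrable (fun t => (B t *ᵥ u t) i) volume a b := by
  have hsum : (fun t => (B t *ᵥ u t) i) = ∑ j, fun t => B t i j * u t j := by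
    funext t
    simp only [Matrix.mulVec, dotProduct, Finset.sum_apply]
  rw [hsum]
  exact .sum _ fun j _ => (hB i j a b).mul_continuousOn (continuous_pi_iff.1 hu j).continuousOn

end IsLocallyIntegrableMatrix

theorem continuous_picardIterate {B : ℝ → Matrix ι ι ℝ} (hB : IsLocallyIntegrableMatrix B)
    (u₀ : ι → ℝ) (k : ℕ) : Continuous (picardIterate B u₀ k) := by
  induction k with
  | zero => exact continuous_const
  | succ k ih =>
    exact continuous_pi fun i => continuous_const.add
      (intervalIntegral.continuous_primitive (hB.mulVec ih i) 0)

theorem picardIterate_nonneg {B : ℝ → Matrix ι ι ℝ} (hB : ∀ t i j, 0 ≤ B t i j) {u₀ : ι → ℝ}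
    (hu₀ : 0 ≤ u₀) (k : ℕ) : ∀ t, 0 ≤ t → 0 ≤ picardIterate B u₀ k t := by
  induction k with
  | zero => exact fun _ _ => hu₀
  | succ k ih =>
    exact fun t ht i => add_nonneg (hu₀ i) (intervalIntegral.integral_nonneg ht fun s hs =>
      Finset.sum_nonneg fun j _ => mul_nonneg (hB s i j) (ih s hs.1 j))

namespace IsCaratheodorySolution

variable {B : ℝ → Matrix ι ι ℝ} {u v : ℝ → ι → ℝ}

theorem of_eq_add_integral (hB : IsLocallyIntegrableMatrix B) (hu : Continuous u)
    (h : ∀ t, u t = u 0 + ∫ s in (0 : ℝ)..t, B s *ᵥ u s) : IsCaratheodorySolution B u := fun i => by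
  refine ⟨hB.mulVec hu i, fun t => ?_⟩
  have hint : IntervalIntegrable (fun s => B s *ᵥ u s) volume 0 t :=
    ⟨Integrable.of_eval fun j => (hB.mulVec hu j 0 t).1,
      Integrable.of_eval fun j => (hB.mulVec hu j 0 t).2⟩
  exact (congrFun (h t) i).trans <| congrArg (u 0 i + ·) <|
    ((ContinuousLinearMap.proj (R := ℝ) i).intervalIntegral_comp_comm hint).symm

theorem continuous (hu : IsCaratheodorySolution B u) : Continuous u :=
  continuous_pi fun i => (hu i).continuous

theorem comp_add_right (hu : IsCaratheodorySolution B u) (r : ℝ) :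
    IsCaratheodorySolution (fun t => B (t + r)) fun t => u (t + r) :=
  fun i => (hu i).comp_add_right r

theorem comp_neg (hu : IsCaratheodorySolution B u) :
    IsCaratheodorySolution (fun t => -B (-t)) fun t => u (-t) := fun i => by
  simpa only [neg_mulVec, Pi.neg_apply] using (hu i).comp_neg

theorem norm_picardIterate_sub_le (hB : IsLocallyIntegrableMatrix B)
    (hu : IsCaratheodorySolution B u) {T C : ℝ} (hC : ∀ t ∈ Set.Icc 0 T, ‖u 0 - u t‖ ≤ C)
    (k : ℕ) : ∀ t ∈ Set.Icc 0 T, ‖picardIterate B (u 0) k t - u t‖ ≤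
      C * ((∫ s in (0 : ℝ)..t, absEntrySum (B s)) ^ k / k.factorial) := by
  induction k with
  | zero => simpa [picardIterate] using hC
  | succ k ih =>
    intro t ht
    have hmaj := ((IsIndefiniteIntegral.integral_zero hB.absEntrySum).pow_div_factorial k).const_mul
      C
    have hmaj_integral := hmaj.integral_eq_sub 0 t
    simp only [intervalIntegral.integral_same, ne_eq, Nat.add_eq_zero_iff, one_ne_zero, and_false,
      not_false_eq_true, zero_pow, zero_div, mul_zero, sub_zero] at hmaj_integral
    have hstep (i : ι) : (picardIterate B (u 0) (k + 1) t - u t) i =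
        ∫ s in (0 : ℝ)..t, (B s *ᵥ (picardIterate B (u 0) k s - u s)) i := by
      simp only [mulVec_sub, Pi.sub_apply, (hu i).eq_add_integral t, picardIterate]
      rw [add_sub_add_left_eq_sub, intervalIntegral.integral_sub
        (hB.mulVec (continuous_picardIterate hB _ k) i 0 t) ((hu i).intervalIntegrable 0 t)]
    have hbound : ∀ s ∈ Set.Icc 0 t, absEntrySum (B s) * ‖picardIterate B (u 0) k s - u s‖ ≤
        C * ((∫ r in (0 : ℝ)..s, absEntrySum (B r)) ^ k / k.factorial * absEntrySum (B s)) := by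
      intro s hs
      rw [← mul_assoc, mul_comm]
      exact mul_le_mul_of_nonneg_right (ih s ⟨hs.1, hs.2.trans ht.2⟩) (absEntrySum_nonneg _)
    rw [← hmaj_integral, pi_norm_le_iff_of_nonneg (intervalIntegral.integral_nonneg ht.1
      fun s hs => (mul_nonneg (absEntrySum_nonneg _) (norm_nonneg _)).trans (hbound s hs))]
    intro i
    rw [hstep]
    exact intervalIntegral.norm_integral_le_of_norm_le ht.1 (ae_of_all _ fun s hs =>
      (abs_mulVec_apply_le _ _ i).trans (hbound s (Set.Ioc_subset_Icc_self hs)))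
      (hmaj.intervalIntegrable 0 t)

theorem tendsto_picardIterate (hB : IsLocallyIntegrableMatrix B)
    (hu : IsCaratheodorySolution B u) {t : ℝ} (ht : 0 ≤ t) :
    Tendsto (fun k => picardIterate B (u 0) k t) atTop (𝓝 (u t)) := by
  obtain ⟨C, hC⟩ := isCompact_Icc.exists_bound_of_continuousOn (s := Set.Icc 0 t)
    (continuous_const.sub hu.continuous).continuousOn
  rw [tendsto_iff_norm_sub_tendsto_zero]
  refine squeeze_zero (fun _ => norm_nonneg _)
    (fun k => hu.norm_picardIterate_sub_le hB hC k t (Set.right_mem_Icc.2 ht)) ?_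
  simpa only [mul_zero] using
    (FloorSemiring.tendsto_pow_div_factorial_atTop _).const_mul C

theorem eq_of_initial_eq (hB : IsLocallyIntegrableMatrix B) (hu : IsCaratheodorySolution B u)
    (hv : IsCaratheodorySolution B v) (h₀ : u 0 = v 0) : u = v := by
  have forward {B : ℝ → Matrix ι ι ℝ} {u v : ℝ → ι → ℝ} (hB : IsLocallyIntegrableMatrix B)
      (hu : IsCaratheodorySolution B u) (hv : IsCaratheodorySolution B v) (h₀ : u 0 = v 0)
      {t : ℝ} (ht : 0 ≤ t) : u t = v t :=
    tendsto_nhds_unique (hu.tendsto_picardIterate hB ht)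
      (h₀ ▸ hv.tendsto_picardIterate hB ht)
  funext t
  rcases le_total 0 t with ht | ht
  · exact forward hB hu hv h₀ ht
  · simpa using forward hB.neg_comp_neg hu.comp_neg hv.comp_neg (by simpa using h₀)
      (neg_nonneg.2 ht)

/-- Multiplication by `exp (∫ ‖B‖)` turns a cooperative system into one with a nonnegative
coefficient matrix, whose Picard iterates are visibly nonnegative. -/
theorem nonneg (hB : IsLocallyIntegrableMatrix B) (hcoop : ∀ t i j, i ≠ j → 0 ≤ B t i j)
    (hu : IsCaratheodorySolution B u) (hu₀ : 0 ≤ u 0) {t : ℝ} (ht : 0 ≤ t) : 0 ≤ u t := by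
  classical
  let M (t : ℝ) : Matrix ι ι ℝ := B t + diagonal fun _ => absEntrySum (B t)
  let E (t : ℝ) : ℝ := Real.exp (∫ s in (0 : ℝ)..t, absEntrySum (B s))
  have hE : ∀ t, 0 < E t := fun t => Real.exp_pos _
  have hM : IsLocallyIntegrableMatrix M := by
    intro i j a b
    rcases eq_or_ne i j with rfl | hij
    · simpa [M] using (hB i i a b).add (hB.absEntrySum a b)
    · simpa [M, hij] using hB i j a b
  have hM_nonneg : ∀ t i j, 0 ≤ M t i j := by
    intro t i j
    rcases eq_or_ne i j with rfl | hij
    · simpa [M] using neg_le_iff_add_nonneg.1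
        ((neg_le_neg (abs_apply_le_absEntrySum (B t) i i)).trans (neg_abs_le _))
    · simpa [M, hij] using hcoop t i j hij
  have hEu : IsCaratheodorySolution M fun t => E t • u t := by
    intro i
    convert (IsIndefiniteIntegral.integral_zero hB.absEntrySum).exp.mul (hu i) using 2 with t
    · rfl
    · simp only [M, E, add_mulVec, mulVec_smul, mulVec_diagonal, Pi.add_apply, Pi.smul_apply,
        smul_eq_mul]
      ring
  have hEu_nonneg : 0 ≤ E t • u t :=
    ge_of_tendsto' (hEu.tendsto_picardIterate hM ht) fun k =>
      picardIterate_nonneg hM_nonneg (smul_nonneg (hE 0).le hu₀) k t ht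
  exact fun i => nonneg_of_mul_nonneg_right (hEu_nonneg i) (hE t)

theorem normSq_isIndefiniteIntegral (hu : IsCaratheodorySolution B u) :
    IsIndefiniteIntegral (fun t => ‖u t‖₂ ^ 2) fun t => 2 * ((B t *ᵥ u t) ⬝ᵥ u t) := by
  convert IsIndefiniteIntegral.sum Finset.univ fun i _ => (hu i).mul (hu i) using 2 with t t
  · rw [norm_toLp_sq]
    simp only [sq]
  · rw [dotProduct, Finset.mul_sum]
    exact Finset.sum_congr rfl fun i _ => by ring

end IsCaratheodorySolution

end LinearSystem

/-! ### Linear growth rates -/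

/-- `φ t ≤ (a + o(1)) t` as `t → ∞`, where the rate `a` may be infinite. -/
def GrowthRateLE (φ : ℝ → ℝ) (a : EReal) : Prop :=
  ∀ b : ℝ, a < b → ∀ᶠ t in atTop, φ t ≤ b * t

/-- `φ t / t → a` as `t → ∞`, split into its two one-sided halves. -/
structure HasGrowthRate (φ : ℝ → ℝ) (a : EReal) : Prop where
  le : GrowthRateLE φ a
  ge : GrowthRateLE (fun t => -φ t) (-a)

namespace GrowthRateLE

variable {φ ψ : ℝ → ℝ} {a : EReal}

theorem top : GrowthRateLE φ ⊤ := fun _ hb => absurd hb not_top_lt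

theorem of_le_add_const (h : GrowthRateLE φ a) {C : ℝ} (hψ : ∀ᶠ t in atTop, ψ t ≤ φ t + C) :
    GrowthRateLE ψ a := by
  intro b hab
  obtain ⟨b', hab', hb'⟩ := EReal.lt_iff_exists_real_btwn.1 hab
  have hlin : ∀ᶠ t in atTop, C ≤ (b - b') * t :=
    (tendsto_id.const_mul_atTop (sub_pos.2 (EReal.coe_lt_coe_iff.1 hb'))).eventually_ge_atTop C
  filter_upwards [h b' hab', hψ, hlin] with t hφ hψ hC
  linarith

theorem comp_add_right (h : GrowthRateLE φ a) (r : ℝ) :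
    GrowthRateLE (fun t => φ (t + r)) a := by
  intro b hab
  obtain ⟨b', hab', hb'⟩ := EReal.lt_iff_exists_real_btwn.1 hab
  have hlin : ∀ᶠ t in atTop, b' * r ≤ (b - b') * t :=
    (tendsto_id.const_mul_atTop
      (sub_pos.2 (EReal.coe_lt_coe_iff.1 hb'))).eventually_ge_atTop (b' * r)
  filter_upwards [(tendsto_atTop_add_const_right atTop r tendsto_id).eventually (h b' hab'), hlin]
    with t hφ hr
  rw [id] at hφ
  linarith

theorem add_const_mul {a : ℝ} (h : GrowthRateLE φ a) (c : ℝ) :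
    GrowthRateLE (fun t => φ t + c * t) ((a + c : ℝ) : EReal) := by
  intro b hb
  filter_upwards [h (b - c) (EReal.coe_lt_coe_iff.2
    (lt_sub_iff_add_lt.2 (EReal.coe_lt_coe_iff.1 hb)))] with t ht
  linarith

theorem of_forall_rat (h : ∀ q : ℚ, a < (q : ℝ) → GrowthRateLE φ (q : ℝ)) :
    GrowthRateLE φ a := by
  intro b hab
  obtain ⟨q, haq, hqb⟩ := EReal.lt_iff_exists_rat_btwn.1 hab
  exact h q haq b hqb

theorem iff_natCast_of_monotone (hφ : Monotone φ) :
    GrowthRateLE φ a ↔ ∀ q : ℚ, a < (q : ℝ) → ∀ᶠ n : ℕ in atTop, φ n ≤ q * n := by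
  refine ⟨fun h q hq => tendsto_natCast_atTop_atTop.eventually (h q hq), fun h b hab => ?_⟩
  obtain ⟨q, haq, hqb⟩ := EReal.lt_iff_exists_rat_btwn.1 hab
  have hlin : ∀ᶠ t in atTop, |(q : ℝ)| ≤ (b - q) * t :=
    (tendsto_id.const_mul_atTop (sub_pos.2 (EReal.coe_lt_coe_iff.1 hqb))).eventually_ge_atTop _
  filter_upwards [tendsto_nat_ceil_atTop.eventually (h q haq), hlin, eventually_ge_atTop 0]
    with t hceil hq ht
  have hround : (q : ℝ) * (⌈t⌉₊ - t) ≤ |(q : ℝ)| := by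
    refine (le_abs_self _).trans ?_
    rw [abs_mul, abs_of_nonneg (sub_nonneg.2 (Nat.le_ceil t))]
    exact mul_le_of_le_one_right (abs_nonneg _) (by linarith [Nat.ceil_lt_add_one ht])
  linarith [hφ (Nat.le_ceil t)]

theorem eventually_inv_mul_le (h : GrowthRateLE φ a) {b : ℝ} (hab : a < b) :
    ∀ᶠ t : ℝ in atTop, ((t⁻¹ : ℝ) : EReal) * (φ t : EReal) ≤ b := by
  filter_upwards [h b hab, eventually_gt_atTop 0] with t ht ht₀
  rw [← EReal.coe_mul, EReal.coe_le_coe_iff, inv_mul_le_iff₀ ht₀, mul_comm]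
  exact ht

theorem limsup_inv_mul_le (h : GrowthRateLE φ a) :
    limsup (fun t : ℝ => ((t⁻¹ : ℝ) : EReal) * (φ t : EReal)) atTop ≤ a := by
  refine le_of_forall_gt_imp_ge_of_dense fun c hac => ?_
  obtain ⟨b, hab, hbc⟩ := EReal.lt_iff_exists_real_btwn.1 hac
  exact limsup_le_of_le (h := (h.eventually_inv_mul_le hab).mono fun t ht => ht.trans hbc.le)

end GrowthRateLE

theorem HasGrowthRate.tendsto_inv_mul {φ : ℝ → ℝ} {a : EReal} (h : HasGrowthRate φ a) :
    Tendsto (fun t : ℝ => ((t⁻¹ : ℝ) : EReal) * (φ t : EReal)) atTop (𝓝 a) := by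
  rw [tendsto_order]
  constructor
  · intro c hca
    obtain ⟨b, hab, hbc⟩ := EReal.lt_iff_exists_real_btwn.1 (EReal.neg_lt_neg_iff.2 hca)
    filter_upwards [h.ge.eventually_inv_mul_le hab] with t ht
    rw [EReal.coe_neg, mul_neg] at ht
    exact EReal.neg_lt_neg_iff.1 (ht.trans_lt hbc)
  · intro c hac
    obtain ⟨b, hab, hbc⟩ := EReal.lt_iff_exists_real_btwn.1 hac
    exact (h.le.eventually_inv_mul_le hab).mono fun t ht => ht.trans_lt hbc

/-! ### The ergodic theorem for flows -/

section MaximalErgodicTheorem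

variable {Ω : Type*} {T : Ω → Ω} {F : Ω → ℝ}

/-- The maximum of the Birkhoff sums of lengths `1, …, n + 1`, in recursive form. -/
noncomputable def maxBirkhoffSum (T : Ω → Ω) (F : Ω → ℝ) : ℕ → Ω → ℝ
  | 0, ω => F ω
  | n + 1, ω => F ω + max 0 (maxBirkhoffSum T F n (T ω))

theorem maxBirkhoffSum_le_succ (n : ℕ) (ω : Ω) :
    maxBirkhoffSum T F n ω ≤ maxBirkhoffSum T F (n + 1) ω := by
  induction n generalizing ω with
  | zero => exact le_add_of_nonneg_right (le_max_left _ _)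
  | succ n ih => exact add_le_add_right (max_le_max_left 0 (ih (T ω))) (F ω)

theorem birkhoffSum_succ_le_maxBirkhoffSum (n : ℕ) (ω : Ω) :
    birkhoffSum T F (n + 1) ω ≤ maxBirkhoffSum T F n ω := by
  induction n generalizing ω with
  | zero => exact (birkhoffSum_one T F ω).le
  | succ n ih =>
    rw [birkhoffSum_succ']
    exact add_le_add_right ((ih (T ω)).trans (le_max_right _ _)) (F ω)

theorem le_maxBirkhoffSum (n : ℕ) (ω : Ω) : F ω ≤ maxBirkhoffSum T F n ω :=
  monotone_nat_of_le_succ (f := fun n => maxBirkhoffSum T F n ω)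
    (fun n => maxBirkhoffSum_le_succ n ω) (Nat.zero_le n)

variable [MeasurableSpace Ω] {μ : Measure Ω}

theorem integral_comp_eq_of_measurePreserving (hT : MeasurePreserving T μ μ)
    (hF : AEStronglyMeasurable F μ) : ∫ ω, F (T ω) ∂μ = ∫ ω, F ω ∂μ := by
  rw [← integral_map hT.aemeasurable (hT.map_eq.symm ▸ hF), hT.map_eq]

theorem integrable_maxBirkhoffSum (hT : MeasurePreserving T μ μ) (hF : Integrable F μ) (n : ℕ) :
    Integrable (maxBirkhoffSum T F n) μ := by
  induction n with
  | zero => exact hF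
  | succ n ih =>
    have hpos : Integrable (fun ω => max 0 (maxBirkhoffSum T F n ω)) μ :=
      (integrable_zero _ _ _).sup ih
    exact hF.add (hT.integrable_comp_of_integrable hpos)

theorem integral_min_maxBirkhoffSum_le (hT : MeasurePreserving T μ μ) (hF : Integrable F μ)
    (n : ℕ) : ∫ ω, min 0 (maxBirkhoffSum T F n ω) ∂μ ≤ ∫ ω, F ω ∂μ := by
  have hM := integrable_maxBirkhoffSum hT hF
  have hpos : Integrable (fun ω => max 0 (maxBirkhoffSum T F n ω)) μ :=
    (integrable_zero _ _ _).sup (hM n)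
  have hneg : Integrable (fun ω => min 0 (maxBirkhoffSum T F n ω)) μ :=
    (integrable_zero _ _ _).inf (hM n)
  have hsplit : ∫ ω, maxBirkhoffSum T F n ω ∂μ =
      ∫ ω, min 0 (maxBirkhoffSum T F n ω) ∂μ + ∫ ω, max 0 (maxBirkhoffSum T F n ω) ∂μ := by
    simp only [← integral_add hneg hpos, min_add_max, zero_add]
  have hsucc : ∫ ω, maxBirkhoffSum T F (n + 1) ω ∂μ =
      ∫ ω, F ω ∂μ + ∫ ω, max 0 (maxBirkhoffSum T F n ω) ∂μ := by
    rw [← integral_comp_eq_of_measurePreserving hT hpos.aestronglyMeasurable]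
    exact integral_add hF (hT.integrable_comp_of_integrable hpos)
  linarith [integral_mono (hM n) (hM (n + 1)) (maxBirkhoffSum_le_succ n)]

theorem integral_nonneg_of_ae_exists_birkhoffSum_pos (hT : MeasurePreserving T μ μ)
    (hF : Integrable F μ) (hpos : ∀ᵐ ω ∂μ, ∃ n, 0 < birkhoffSum T F (n + 1) ω) :
    0 ≤ ∫ ω, F ω ∂μ := by
  have hlim : Tendsto (fun n => ∫ ω, min 0 (maxBirkhoffSum T F n ω) ∂μ) atTop
      (𝓝 (∫ _, (0 : ℝ) ∂μ)) := by
    refine tendsto_integral_of_dominated_convergence (fun ω => |F ω|)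
      (fun n => ((integrable_zero _ _ _).inf
        (integrable_maxBirkhoffSum hT hF n)).aestronglyMeasurable) hF.abs
      (fun n => Eventually.of_forall fun ω => ?_) ?_
    · rw [Real.norm_eq_abs, abs_of_nonpos (min_le_left _ _), neg_le]
      exact le_min (neg_nonpos.2 (abs_nonneg _)) ((neg_abs_le _).trans (le_maxBirkhoffSum n ω))
    · filter_upwards [hpos] with ω ⟨n, hn⟩
      refine tendsto_const_nhds.congr' ?_
      filter_upwards [eventually_ge_atTop n] with m hm
      have hmono : Monotone fun k => maxBirkhoffSum T F k ω :=
        monotone_nat_of_le_succ fun k => maxBirkhoffSum_le_succ k ω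
      exact (min_eq_left ((hn.le.trans (birkhoffSum_succ_le_maxBirkhoffSum n ω)).trans
        (hmono hm))).symm
  rw [integral_zero] at hlim
  exact le_of_tendsto' hlim (integral_min_maxBirkhoffSum_le hT hF)

end MaximalErgodicTheorem

section Flow

variable {Ω : Type*}

/-- An action of the additive group `ℝ` on `Ω`, as a family of maps. -/
structure IsFlow (θ : ℝ → Ω → Ω) : Prop where
  zero : ∀ ω, θ 0 ω = ω
  add : ∀ s t ω, θ (s + t) ω = θ s (θ t ω)

/-- A jointly measurable flow which preserves the measure `μ`. -/
structure IsMeasurePreservingFlow [MeasurableSpace Ω] (θ : ℝ → Ω → Ω) (μ : Measure Ω) : Prop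
    extends IsFlow θ where
  measurable_uncurry : Measurable fun p : ℝ × Ω => θ p.1 p.2
  measurePreserving : ∀ t, MeasurePreserving (θ t) μ μ

/-- A measure-preserving flow whose strictly invariant measurable sets obey a zero-one law. -/
structure IsErgodicFlow [MeasurableSpace Ω] (θ : ℝ → Ω → Ω) (μ : Measure Ω) : Prop
    extends IsMeasurePreservingFlow θ μ where
  measure_eq_zero_or_one : ∀ F : Set Ω, MeasurableSet F → (∀ t, θ t ⁻¹' F = F) → μ F = 0 ∨ μ F = 1

/-- Every orbit of `θ` sees `f` as a locally integrable function of time. -/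
def LocallyIntegrableAlongOrbits (θ : ℝ → Ω → Ω) (f : Ω → ℝ) : Prop :=
  ∀ ω a b, IntervalIntegrable (fun t => f (θ t ω)) volume a b

/-- The additive cocycle `t ↦ ∫₀ᵗ f (θ s ω) ds` generated by `f`. -/
noncomputable def orbitIntegral (θ : ℝ → Ω → Ω) (f : Ω → ℝ) (ω : Ω) (t : ℝ) : ℝ :=
  ∫ s in (0 : ℝ)..t, f (θ s ω)

variable {θ : ℝ → Ω → Ω} {f : Ω → ℝ}

theorem IsFlow.neg_apply_apply (hθ : IsFlow θ) (t : ℝ) (ω : Ω) : θ (-t) (θ t ω) = ω := by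
  rw [← hθ.add, neg_add_cancel, hθ.zero]

theorem IsFlow.iterate (hθ : IsFlow θ) (r : ℝ) (n : ℕ) (ω : Ω) : (θ r)^[n] ω = θ (n * r) ω := by
  induction n generalizing ω with
  | zero => rw [Nat.cast_zero, zero_mul, hθ.zero, Function.iterate_zero_apply]
  | succ n ih => rw [Function.iterate_succ_apply, ih, ← hθ.add, Nat.cast_succ, add_one_mul]

theorem orbitIntegral_comp_flow (hθ : IsFlow θ) (hf : LocallyIntegrableAlongOrbits θ f)
    (r : ℝ) (ω : Ω) (t : ℝ) :
    orbitIntegral θ f (θ r ω) t = orbitIntegral θ f ω (t + r) - orbitIntegral θ f ω r := by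
  simp only [orbitIntegral, ← hθ.add]
  rw [intervalIntegral.integral_comp_add_right (fun s => f (θ s ω)),
    intervalIntegral.integral_interval_sub_left (hf ω _ _) (hf ω _ _), zero_add]

theorem growthRateLE_orbitIntegral_comp_flow_iff (hθ : IsFlow θ)
    (hf : LocallyIntegrableAlongOrbits θ f) {a : EReal} (r : ℝ) (ω : Ω) :
    GrowthRateLE (orbitIntegral θ f (θ r ω)) a ↔ GrowthRateLE (orbitIntegral θ f ω) a := by
  have himp : ∀ r ω, GrowthRateLE (orbitIntegral θ f ω) a →
      GrowthRateLE (orbitIntegral θ f (θ r ω)) a := fun r ω h =>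
    (h.comp_add_right r).of_le_add_const (C := -orbitIntegral θ f ω r) <|
      Eventually.of_forall fun t => (orbitIntegral_comp_flow hθ hf r ω t).le
  refine ⟨fun h => ?_, himp r ω⟩
  simpa only [hθ.neg_apply_apply] using himp (-r) _ h

theorem orbitIntegral_mono (hf : LocallyIntegrableAlongOrbits θ f) (hf₀ : ∀ ω, 0 ≤ f ω) (ω : Ω) :
    Monotone (orbitIntegral θ f ω) := fun s t hst => by
  rw [← sub_nonneg, orbitIntegral, orbitIntegral,
    intervalIntegral.integral_interval_sub_left (hf ω _ _) (hf ω _ _)]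
  exact intervalIntegral.integral_nonneg hst fun _ _ => hf₀ _

theorem birkhoffSum_orbitIntegral_sub_const (hθ : IsFlow θ)
    (hf : LocallyIntegrableAlongOrbits θ f) (c : ℝ) (n : ℕ) (ω : Ω) :
    birkhoffSum (θ 1) (fun ω => orbitIntegral θ f ω 1 - c) n ω =
      orbitIntegral θ f ω n - c * n := by
  induction n with
  | zero => simp [orbitIntegral]
  | succ n ih =>
    rw [birkhoffSum_succ, ih, hθ.iterate, mul_one, orbitIntegral_comp_flow hθ hf, Nat.cast_succ,
      add_comm (1 : ℝ)]
    ring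

theorem exists_birkhoffSum_pos_of_not_growthRateLE (hθ : IsFlow θ)
    (hf : LocallyIntegrableAlongOrbits θ f) (hf₀ : ∀ ω, 0 ≤ f ω) {a : ℝ} {ω : Ω}
    (h : ¬ GrowthRateLE (orbitIntegral θ f ω) a) :
    ∃ n, 0 < birkhoffSum (θ 1) (fun ω => orbitIntegral θ f ω 1 - a) (n + 1) ω := by
  rw [GrowthRateLE.iff_natCast_of_monotone (orbitIntegral_mono hf hf₀ ω)] at h
  push Not at h
  obtain ⟨q, haq, hq⟩ := h
  obtain ⟨n, hn, hn₁⟩ := (hq.and_eventually (eventually_ge_atTop 1)).exists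
  refine ⟨n - 1, ?_⟩
  rw [Nat.sub_add_cancel hn₁, birkhoffSum_orbitIntegral_sub_const hθ hf, sub_pos]
  exact (mul_le_mul_of_nonneg_right (EReal.coe_lt_coe_iff.1 haq).le n.cast_nonneg).trans_lt hn

variable [MeasurableSpace Ω] {μ : Measure Ω}

theorem measurable_orbitIntegral (hθ : Measurable fun p : ℝ × Ω => θ p.1 p.2) (hf : Measurable f)
    (t : ℝ) : Measurable fun ω => orbitIntegral θ f ω t :=
  ((hf.comp hθ).stronglyMeasurable.integral_prod_left'.sub
    (hf.comp hθ).stronglyMeasurable.integral_prod_left').measurable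

namespace IsMeasurePreservingFlow

theorem integrable_prod [SFinite μ] (hθ : IsMeasurePreservingFlow θ μ) (hf : Integrable f μ)
    (ν : Measure ℝ) [IsFiniteMeasure ν] :
    Integrable (fun p : ℝ × Ω => f (θ p.1 p.2)) (ν.prod μ) :=
  ((MeasurePreserving.id ν).skew_product hθ.measurable_uncurry
    (Eventually.of_forall fun t => (hθ.measurePreserving t).map_eq)).integrable_comp_of_integrable
    (g := fun p : ℝ × Ω => f p.2) (hf.comp_snd ν)

theorem integrable_orbitIntegral [SFinite μ] (hθ : IsMeasurePreservingFlow θ μ)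
    (hf : Integrable f μ) (t : ℝ) : Integrable (fun ω => orbitIntegral θ f ω t) μ :=
  (hθ.integrable_prod hf _).integral_prod_right.sub (hθ.integrable_prod hf _).integral_prod_right

theorem integral_orbitIntegral [SFinite μ] (hθ : IsMeasurePreservingFlow θ μ)
    (hf : Integrable f μ) {t : ℝ} (ht : 0 ≤ t) :
    ∫ ω, orbitIntegral θ f ω t ∂μ = t * ∫ ω, f ω ∂μ := by
  simp only [orbitIntegral, intervalIntegral.integral_of_le ht]
  rw [← integral_integral_swap (f := fun s ω => f (θ s ω)) (hθ.integrable_prod hf _)]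
  simp only [integral_comp_eq_of_measurePreserving (hθ.measurePreserving _)
    hf.aestronglyMeasurable, integral_const, measureReal_restrict_apply_univ, Real.volume_real_Ioc,
    sub_zero, max_eq_left ht, smul_eq_mul]

end IsMeasurePreservingFlow

theorem measurableSet_growthRateLE_orbitIntegral (hθ : Measurable fun p : ℝ × Ω => θ p.1 p.2)
    (hfm : Measurable f) (hf : LocallyIntegrableAlongOrbits θ f) (hf₀ : ∀ ω, 0 ≤ f ω)
    (a : EReal) : MeasurableSet {ω | GrowthRateLE (orbitIntegral θ f ω) a} := by
  simp only [GrowthRateLE.iff_natCast_of_monotone (orbitIntegral_mono hf hf₀ _), eventually_atTop,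
    Set.ofPred_forall, Set.ofPred_exists]
  exact .iInter fun q => .iInter fun _ => .iUnion fun _ => .iInter fun n => .iInter fun _ =>
    measurableSet_le (measurable_orbitIntegral hθ hfm n) measurable_const

namespace IsErgodicFlow

variable [IsProbabilityMeasure μ]

theorem ae_growthRateLE_orbitIntegral_of_integral_lt (hθ : IsErgodicFlow θ μ)
    (hfm : Measurable f) (hfi : Integrable f μ) (hf : LocallyIntegrableAlongOrbits θ f)
    (hf₀ : ∀ ω, 0 ≤ f ω) {a : ℝ} (ha : ∫ ω, f ω ∂μ < a) :
    ∀ᵐ ω ∂μ, GrowthRateLE (orbitIntegral θ f ω) a := by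
  have hG := measurableSet_growthRateLE_orbitIntegral hθ.measurable_uncurry hfm hf hf₀ a
  rcases hθ.measure_eq_zero_or_one _ hG fun t => Set.ext fun ω =>
    growthRateLE_orbitIntegral_comp_flow_iff hθ.toIsFlow hf t ω with hzero | hone
  · have hnot : ∀ᵐ ω ∂μ, ¬ GrowthRateLE (orbitIntegral θ f ω) a :=
      measure_eq_zero_iff_ae_notMem.1 hzero
    have hF := (hθ.integrable_orbitIntegral hfi 1).sub (integrable_const a)
    have hnonneg := integral_nonneg_of_ae_exists_birkhoffSum_pos (hθ.measurePreserving 1) hF <|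
      hnot.mono fun ω => exists_birkhoffSum_pos_of_not_growthRateLE hθ.toIsFlow hf hf₀
    rw [integral_sub' (hθ.integrable_orbitIntegral hfi 1) (integrable_const a),
      hθ.integral_orbitIntegral hfi zero_le_one, one_mul, integral_const, probReal_univ,
      one_smul, sub_nonneg] at hnonneg
    exact absurd ha hnonneg.not_gt
  · exact (mem_ae_iff_prob_eq_one hG).2 hone

theorem ae_growthRateLE_orbitIntegral_of_nonneg (hθ : IsErgodicFlow θ μ)
    (hfm : Measurable f) (hfi : Integrable f μ) (hf : LocallyIntegrableAlongOrbits θ f)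
    (hf₀ : ∀ ω, 0 ≤ f ω) : ∀ᵐ ω ∂μ, GrowthRateLE (orbitIntegral θ f ω) (∫ ω, f ω ∂μ : ℝ) := by
  have hrat : ∀ᵐ ω ∂μ, ∀ q : ℚ, ((∫ ω, f ω ∂μ : ℝ) : EReal) < (q : ℝ) →
      GrowthRateLE (orbitIntegral θ f ω) (q : ℝ) := by
    simp only [ae_all_iff, EReal.coe_lt_coe_iff]
    exact fun q => hθ.ae_growthRateLE_orbitIntegral_of_integral_lt hfm hfi hf hf₀
  exact hrat.mono fun ω => GrowthRateLE.of_forall_rat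

theorem ae_growthRateLE_orbitIntegral_of_integrable_max (hθ : IsErgodicFlow θ μ)
    (hfm : Measurable f) (hf : LocallyIntegrableAlongOrbits θ f) {c : ℝ}
    (hfi : Integrable (fun ω => max (f ω) (-c)) μ) :
    ∀ᵐ ω ∂μ, GrowthRateLE (orbitIntegral θ f ω) (∫ ω, max (f ω) (-c) ∂μ : ℝ) := by
  have hmax : LocallyIntegrableAlongOrbits θ fun ω => max (f ω) (-c) + c := fun ω a b =>
    ⟨((hf ω a b).1.sup intervalIntegrable_const.1).add intervalIntegrable_const.1,
      ((hf ω a b).2.sup intervalIntegrable_const.2).add intervalIntegrable_const.2⟩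
  filter_upwards [hθ.ae_growthRateLE_orbitIntegral_of_nonneg
    ((hfm.max measurable_const).add_const c) (hfi.add (integrable_const c)) hmax
    fun ω => neg_le_iff_add_nonneg.1 (le_max_right (f ω) (-c))] with ω hω
  have hmean : (∫ ω, (max (f ω) (-c) + c) ∂μ) + -c = ∫ ω, max (f ω) (-c) ∂μ := by
    simp [integral_add hfi (integrable_const c)]
  rw [← hmean]
  refine (hω.add_const_mul (-c)).of_le_add_const (C := 0) ?_
  filter_upwards [eventually_ge_atTop 0] with t ht
  have hle : ∫ s in (0 : ℝ)..t, (f (θ s ω) + c) ≤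
      orbitIntegral θ (fun ω => max (f ω) (-c) + c) ω t :=
    intervalIntegral.integral_mono_on ht ((hf ω 0 t).add intervalIntegrable_const) (hmax ω 0 t)
      fun s _ => add_le_add_left (le_max_left _ _) c
  rw [intervalIntegral.integral_add (hf ω 0 t) intervalIntegrable_const,
    intervalIntegral.integral_const, sub_zero, smul_eq_mul] at hle
  rw [orbitIntegral]
  linarith

end IsErgodicFlow

end Flow

section ExtendedIntegral

variable {Ω : Type*} [MeasurableSpace Ω] {μ : Measure Ω} {f : Ω → ℝ}

open Classical in
/-- The integral of a function with integrable positive part, as an element of `[-∞, ∞)`: the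
value `⊥` records a non-integrable negative part. -/
noncomputable def erealIntegral (f : Ω → ℝ) (μ : Measure Ω) : EReal :=
  if Integrable f μ then ((∫ ω, f ω ∂μ : ℝ) : EReal) else ⊥

variable [IsFiniteMeasure μ]

theorem integrable_max_neg (hfm : Measurable f) (hf : Integrable (fun ω => max (f ω) 0) μ) {c : ℝ}
    (hc : 0 ≤ c) : Integrable (fun ω => max (f ω) (-c)) μ := by
  refine (hf.add (integrable_const c)).mono' (hfm.max measurable_const).aestronglyMeasurable
    (Eventually.of_forall fun ω => abs_le.2 ⟨?_, max_le ?_ ?_⟩) <;>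
  simp only [Pi.add_apply] <;>
  linarith [le_max_left (f ω) 0, le_max_right (f ω) 0, le_max_right (f ω) (-c)]

theorem integrable_of_forall_le_integral_max_neg (hfm : Measurable f)
    (hf : Integrable (fun ω => max (f ω) 0) μ) {c : ℝ}
    (hc : ∀ k : ℕ, c ≤ ∫ ω, max (f ω) (-k) ∂μ) : Integrable f μ := by
  have hcover : AECover μ atTop fun k : ℕ => {ω | -(k : ℝ) ≤ f ω} :=
    ⟨Eventually.of_forall fun ω => (tendsto_neg_atTop_atBot.comp
        tendsto_natCast_atTop_atTop).eventually_le_atBot (f ω),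
      fun k => measurableSet_le measurable_const hfm⟩
  have hmax : ∀ k : ℕ, Integrable (fun ω => max (f ω) (-k)) μ :=
    fun k => integrable_max_neg hfm hf k.cast_nonneg
  have heq : ∀ k : ℕ, Set.EqOn (fun ω => max (f ω) (-(k : ℝ))) f {ω | -(k : ℝ) ≤ f ω} :=
    fun k ω hω => max_eq_left hω
  refine hcover.integrable_of_integral_norm_bounded (2 * ∫ ω, max (f ω) 0 ∂μ - c)
    (fun k => (hmax k).integrableOn.congr_fun (heq k) (hcover.measurableSet k))
    (Eventually.of_forall fun k => ?_)
  calc ∫ ω in {ω | -(k : ℝ) ≤ f ω}, ‖f ω‖ ∂μ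
      = ∫ ω in {ω | -(k : ℝ) ≤ f ω}, ‖max (f ω) (-k)‖ ∂μ :=
        setIntegral_congr_fun (hcover.measurableSet k) fun ω hω =>
          congrArg norm (heq k hω).symm
    _ ≤ ∫ ω, ‖max (f ω) (-k)‖ ∂μ :=
        setIntegral_le_integral (hmax k).norm (Eventually.of_forall fun _ => norm_nonneg _)
    _ ≤ ∫ ω, (2 * max (f ω) 0 - max (f ω) (-k)) ∂μ := by
        refine integral_mono (hmax k).norm ((hf.const_mul 2).sub (hmax k)) fun ω => ?_
        have hk : -(k : ℝ) ≤ 0 := neg_nonpos.2 k.cast_nonneg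
        have := max_le_max_left (f ω) hk
        refine abs_le.2 ⟨?_, ?_⟩ <;> linarith [le_max_right (f ω) 0]
    _ = 2 * ∫ ω, max (f ω) 0 ∂μ - ∫ ω, max (f ω) (-k) ∂μ := by
        rw [integral_sub (hf.const_mul 2) (hmax k), integral_const_mul]
    _ ≤ 2 * ∫ ω, max (f ω) 0 ∂μ - c := sub_le_sub_left (hc k) _

theorem tendsto_integral_max_neg (hf : Integrable f μ) :
    Tendsto (fun k : ℕ => ∫ ω, max (f ω) (-k) ∂μ) atTop (𝓝 (∫ ω, f ω ∂μ)) := by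
  refine tendsto_integral_of_dominated_convergence (fun ω => |f ω|)
    (fun k => (hf.sup (integrable_const _)).aestronglyMeasurable) hf.abs
    (fun k => Eventually.of_forall fun ω => ?_) (Eventually.of_forall fun ω => ?_)
  · exact abs_le.2 ⟨(neg_abs_le _).trans (le_max_left _ _), max_le (le_abs_self _)
      ((neg_nonpos.2 k.cast_nonneg).trans (abs_nonneg _))⟩
  · refine tendsto_const_nhds.congr' ?_
    filter_upwards [(tendsto_neg_atTop_atBot.comp
      tendsto_natCast_atTop_atTop).eventually_le_atBot (f ω)] with k hk
    exact (max_eq_left hk).symm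

theorem exists_integral_max_neg_lt (hfm : Measurable f)
    (hf : Integrable (fun ω => max (f ω) 0) μ) {c : ℝ} (hc : erealIntegral f μ < c) :
    ∃ k : ℕ, ∫ ω, max (f ω) (-k) ∂μ < c := by
  by_cases hfi : Integrable f μ
  · rw [erealIntegral, if_pos hfi, EReal.coe_lt_coe_iff] at hc
    exact ((tendsto_integral_max_neg hfi).eventually_lt_const hc).exists
  · by_contra! hle
    exact hfi (integrable_of_forall_le_integral_max_neg hfm hf hle)

end ExtendedIntegral

namespace IsErgodicFlow

variable {Ω : Type*} [MeasurableSpace Ω] {μ : Measure Ω} [IsProbabilityMeasure μ]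
  {θ : ℝ → Ω → Ω} {f : Ω → ℝ}

theorem ae_growthRateLE_orbitIntegral (hθ : IsErgodicFlow θ μ) (hfm : Measurable f)
    (hf : LocallyIntegrableAlongOrbits θ f) (hfi : Integrable (fun ω => max (f ω) 0) μ) :
    ∀ᵐ ω ∂μ, GrowthRateLE (orbitIntegral θ f ω) (erealIntegral f μ) := by
  have htrunc : ∀ᵐ ω ∂μ, ∀ k : ℕ,
      GrowthRateLE (orbitIntegral θ f ω) (∫ ω, max (f ω) (-k) ∂μ : ℝ) :=
    ae_all_iff.2 fun k => hθ.ae_growthRateLE_orbitIntegral_of_integrable_max hfm hf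
      (integrable_max_neg hfm hfi k.cast_nonneg)
  filter_upwards [htrunc] with ω hω c hc
  obtain ⟨k, hk⟩ := exists_integral_max_neg_lt hfm hfi hc
  exact hω k c (EReal.coe_lt_coe_iff.2 hk)

theorem ae_hasGrowthRate_orbitIntegral (hθ : IsErgodicFlow θ μ) (hfm : Measurable f)
    (hf : LocallyIntegrableAlongOrbits θ f) (hfi : Integrable (fun ω => max (f ω) 0) μ) :
    ∀ᵐ ω ∂μ, HasGrowthRate (orbitIntegral θ f ω) (erealIntegral f μ) := by
  have hupper := hθ.ae_growthRateLE_orbitIntegral hfm hf hfi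
  by_cases hfint : Integrable f μ
  · have hlower := hθ.ae_growthRateLE_orbitIntegral hfm.neg (fun ω a b => (hf ω a b).neg)
      (hfint.neg.sup (integrable_zero _ _ _))
    have hneg : erealIntegral (-f) μ = -erealIntegral f μ := by
      rw [erealIntegral, erealIntegral, if_pos hfint, if_pos hfint.neg, integral_neg',
        EReal.coe_neg]
    filter_upwards [hupper, hlower] with ω hle hge
    have horbit : orbitIntegral θ (-f) ω = fun t => -orbitIntegral θ f ω t :=
      funext fun t => intervalIntegral.integral_neg
    exact ⟨hle, by rwa [hneg, horbit] at hge⟩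
  · filter_upwards [hupper] with ω hle
    refine ⟨hle, ?_⟩
    rw [erealIntegral, if_neg hfint, EReal.neg_bot]
    exact .top

end IsErgodicFlow

section Flow

variable {Ω : Type*} {θ : ℝ → Ω → Ω} {f : Ω → ℝ}

theorem HasGrowthRate.orbitIntegral_comp_flow (hθ : IsFlow θ)
    (hf : LocallyIntegrableAlongOrbits θ f) {a : EReal} {ω : Ω}
    (h : HasGrowthRate (orbitIntegral θ f ω) a) (r : ℝ) :
    HasGrowthRate (orbitIntegral θ f (θ r ω)) a := by
  refine ⟨(growthRateLE_orbitIntegral_comp_flow_iff hθ hf r ω).2 h.le,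
    (h.ge.comp_add_right r).of_le_add_const (C := orbitIntegral θ f ω r) <|
      Eventually.of_forall fun t => ?_⟩
  rw [_root_.orbitIntegral_comp_flow hθ hf, neg_sub, sub_eq_neg_add]

variable [MeasurableSpace Ω] {μ : Measure Ω}

namespace IsMeasurePreservingFlow

theorem ae_exists_frequently_neg_natCast_le [IsFiniteMeasure μ]
    (hθ : IsMeasurePreservingFlow θ μ) (hf : Measurable f) :
    ∀ᵐ ω ∂μ, ∃ K, ∃ᶠ n : ℕ in atTop, f (θ (-n) ω) ≤ K := by
  have hrec : ∀ᵐ ω ∂μ, ∀ m : ℕ, f ω ≤ m → ∃ᶠ n : ℕ in atTop, f ((θ (-1))^[n] ω) ≤ m :=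
    ae_all_iff.2 fun m => (hθ.measurePreserving (-1)).conservative
      |>.ae_mem_imp_frequently_image_mem (measurableSet_le hf measurable_const).nullMeasurableSet
  filter_upwards [hrec] with ω hω
  obtain ⟨m, hm⟩ := exists_nat_ge (f ω)
  refine ⟨m, ?_⟩
  simpa only [hθ.iterate, mul_neg_one] using hω m hm

/-- The orbits which meet a full-measure set at almost every time form an invariant set. -/
theorem exists_measurableSet_invariant_of_ae [SFinite μ] (hθ : IsMeasurePreservingFlow θ μ)
    {P : Ω → Prop} (hP : ∀ᵐ ω ∂μ, P ω) (hinv : ∀ t ω, P ω → P (θ t ω)) :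
    ∃ S, MeasurableSet S ∧ (∀ t ω, ω ∈ S ↔ θ t ω ∈ S) ∧ (∀ᵐ ω ∂μ, ω ∈ S) ∧ ∀ ω ∈ S, P ω := by
  obtain ⟨B, hBae, hBm, hBP⟩ := hP.exists_measurable_mem
  have hθB : MeasurableSet {p : ℝ × Ω | θ p.1 p.2 ∉ B} :=
    hθ.measurable_uncurry hBm.compl
  refine ⟨{ω | ∀ᵐ t : ℝ, θ t ω ∈ B}, ?_, fun r ω => ?_, ?_, fun ω hω => ?_⟩
  · exact measurable_measure_prodMk_right hθB (measurableSet_singleton 0)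
  · have hquasi := quasiMeasurePreserving_add_right (volume : Measure ℝ)
    simp only [Set.mem_ofPred_eq, ← hθ.add]
    refine ⟨(hquasi r).ae, fun h => ?_⟩
    simpa only [neg_add_cancel_right] using (hquasi (-r)).ae h
  · have hprod : ∀ᵐ t : ℝ, ∀ᵐ ω ∂μ, θ t ω ∈ B := Eventually.of_forall fun t =>
      (hθ.measurePreserving t).quasiMeasurePreserving.ae hBae
    exact (Measure.ae_ae_comm hθB.of_compl).1 hprod
  · obtain ⟨t, ht⟩ := Eventually.exists (show ∀ᵐ t : ℝ, θ t ω ∈ B from hω)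
    exact hθ.neg_apply_apply t ω ▸ hinv (-t) _ (hBP _ ht)

end IsMeasurePreservingFlow

end Flow

/-! ### Cooperative linear cocycles -/

section Cocycle

variable {Ω ι : Type*} [Fintype ι]

/-- `U` is the solution operator of the family of linear systems `u' = A (θ t ω) u`. -/
structure IsLinearCocycle (θ : ℝ → Ω → Ω) (A : Ω → Matrix ι ι ℝ) (U : Ω → ℝ → Matrix ι ι ℝ) : Prop
    extends IsFlow θ where
  isLocallyIntegrableMatrix : ∀ ω, IsLocallyIntegrableMatrix fun t => A (θ t ω)
  zero_mulVec : ∀ ω v, U ω 0 *ᵥ v = v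
  isCaratheodorySolution : ∀ ω v, IsCaratheodorySolution (fun t => A (θ t ω)) fun t => U ω t *ᵥ v

/-- A linear cocycle whose generator has nonnegative off-diagonal entries. -/
structure IsCooperativeCocycle (θ : ℝ → Ω → Ω) (A : Ω → Matrix ι ι ℝ) (U : Ω → ℝ → Matrix ι ι ℝ) :
    Prop extends IsLinearCocycle θ A U where
  offDiag_nonneg : ∀ ω i j, i ≠ j → 0 ≤ A ω i j

variable {θ : ℝ → Ω → Ω} {A : Ω → Matrix ι ι ℝ} {U : Ω → ℝ → Matrix ι ι ℝ}

/-- Rescaling the integral to the fixed interval `[0, 1]` makes its dependence on the endpoint an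
instance of the measurability of parameter integrals. -/
theorem measurable_picardIterate_along_orbits [MeasurableSpace Ω]
    (hθ : Measurable fun p : ℝ × Ω => θ p.1 p.2) (hA : ∀ i j, Measurable fun ω => A ω i j)
    (v : ι → ℝ) (k : ℕ) :
    Measurable fun p : ℝ × Ω => picardIterate (fun s => A (θ s p.2)) v k p.1 := by
  induction k with
  | zero => exact measurable_const
  | succ k ih =>
    refine measurable_pi_lambda _ fun i => measurable_const.add ?_
    let F (p : ℝ × Ω) : ℝ := (A (θ p.1 p.2) *ᵥ picardIterate (fun s => A (θ s p.2)) v k p.1) i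
    have hF : Measurable F := Finset.measurable_sum _ fun j _ =>
      ((hA i j).comp hθ).mul ((measurable_pi_apply j).comp ih)
    have hrescale : (fun p : ℝ × Ω => ∫ s in (0 : ℝ)..p.1, F (s, p.2)) =
        fun p => p.1 * ∫ r in Set.Ioc (0 : ℝ) 1, F (p.1 * r, p.2) := by
      funext p
      rw [← intervalIntegral.integral_of_le zero_le_one, ← smul_eq_mul,
        intervalIntegral.smul_integral_comp_mul_left fun s => F (s, p.2), mul_zero, mul_one]
    have hscaled : Measurable fun x : (ℝ × Ω) × ℝ => F (x.1.1 * x.2, x.1.2) :=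
      hF.comp (by fun_prop)
    change Measurable fun p : ℝ × Ω => ∫ s in (0 : ℝ)..p.1, F (s, p.2)
    rw [hrescale]
    exact measurable_fst.mul hscaled.stronglyMeasurable.integral_prod_right'.measurable

namespace IsLinearCocycle

theorem of_eq_add_integral (hθ : IsFlow θ)
    (hB : ∀ ω, IsLocallyIntegrableMatrix fun t => A (θ t ω))
    (hcont : ∀ ω v, Continuous fun t => U ω t *ᵥ v)
    (hint : ∀ ω v t, U ω t *ᵥ v = v + ∫ s in (0 : ℝ)..t, A (θ s ω) *ᵥ (U ω s *ᵥ v)) :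
    IsLinearCocycle θ A U := by
  have hzero (ω : Ω) (v : ι → ℝ) : U ω 0 *ᵥ v = v := by
    rw [hint, intervalIntegral.integral_same, add_zero]
  refine ⟨hθ, hB, hzero, fun ω v => .of_eq_add_integral (hB ω) (hcont ω v) fun t => ?_⟩
  rw [hzero]
  exact hint ω v t

theorem mulVec_mulVec (hU : IsLinearCocycle θ A U) (ω : Ω) (s r : ℝ) (v : ι → ℝ) :
    U (θ r ω) s *ᵥ (U ω r *ᵥ v) = U ω (s + r) *ᵥ v := by
  have hA := hU.isLocallyIntegrableMatrix (θ r ω)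
  have hleft := hU.isCaratheodorySolution (θ r ω) (U ω r *ᵥ v)
  simp only [← hU.add] at hA hleft
  refine congrFun (hleft.eq_of_initial_eq hA ((hU.isCaratheodorySolution ω v).comp_add_right r)
    ?_) s
  rw [hU.zero_mulVec, zero_add]

theorem neg_mulVec_mulVec (hU : IsLinearCocycle θ A U) (ω : Ω) (r : ℝ) (v : ι → ℝ) :
    U (θ r ω) (-r) *ᵥ (U ω r *ᵥ v) = v := by
  rw [hU.mulVec_mulVec, neg_add_cancel, hU.zero_mulVec]

theorem mulVec_neg_mulVec (hU : IsLinearCocycle θ A U) (ω : Ω) (r : ℝ) (v : ι → ℝ) :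
    U ω r *ᵥ (U (θ r ω) (-r) *ᵥ v) = v := by
  simpa only [hU.neg_apply_apply, neg_neg] using hU.neg_mulVec_mulVec (θ r ω) (-r) v

theorem mulVec_ne_zero (hU : IsLinearCocycle θ A U) (ω : Ω) (r : ℝ) {v : ι → ℝ} (hv : v ≠ 0) :
    U ω r *ᵥ v ≠ 0 := fun h =>
  hv (by rw [← hU.neg_mulVec_mulVec ω r v, h, mulVec_zero])

theorem measurable_mulVec [MeasurableSpace Ω] (hU : IsLinearCocycle θ A U)
    (hθ : Measurable fun p : ℝ × Ω => θ p.1 p.2) (hA : ∀ i j, Measurable fun ω => A ω i j)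
    (v : ι → ℝ) {t : ℝ} (ht : 0 ≤ t) : Measurable fun ω => U ω t *ᵥ v := by
  refine measurable_of_tendsto_metrizable (f := fun k ω => picardIterate (fun s => A (θ s ω)) v k t)
    (fun k => (measurable_picardIterate_along_orbits hθ hA v k).comp measurable_prodMk_left)
    (tendsto_pi_nhds.2 fun ω => ?_)
  simpa only [hU.zero_mulVec] using (hU.isCaratheodorySolution ω v).tendsto_picardIterate
    (hU.isLocallyIntegrableMatrix ω) ht

end IsLinearCocycle

theorem norm_toLp_mono {u v : ι → ℝ} (h : |u| ≤ v) : ‖u‖₂ ≤ ‖v‖₂ := by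
  rw [← sq_le_sq₀ (norm_nonneg _) (norm_nonneg _), norm_toLp_sq, norm_toLp_sq]
  exact Finset.sum_le_sum fun i _ => sq_le_sq' (abs_le.1 (h i)).1 (abs_le.1 (h i)).2

namespace IsCooperativeCocycle

theorem mulVec_nonneg (hU : IsCooperativeCocycle θ A U) (ω : Ω) {t : ℝ} (ht : 0 ≤ t) {v : ι → ℝ}
    (hv : 0 ≤ v) : 0 ≤ U ω t *ᵥ v :=
  (hU.isCaratheodorySolution ω v).nonneg (hU.isLocallyIntegrableMatrix ω)
    (fun _ => hU.offDiag_nonneg _) ((hU.zero_mulVec ω v).symm ▸ hv) ht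

theorem mulVec_nonneg_of_le (hU : IsCooperativeCocycle θ A U) {ω : Ω} {s t : ℝ} (hst : s ≤ t)
    {v : ι → ℝ} (hv : 0 ≤ U ω s *ᵥ v) : 0 ≤ U ω t *ᵥ v := by
  simpa only [hU.mulVec_mulVec, sub_add_cancel] using
    hU.mulVec_nonneg (θ s ω) (sub_nonneg.2 hst) hv

theorem mulVec_mono_of_le (hU : IsCooperativeCocycle θ A U) {ω : Ω} {s t : ℝ} (hst : s ≤ t)
    {u v : ι → ℝ} (huv : U ω s *ᵥ u ≤ U ω s *ᵥ v) : U ω t *ᵥ u ≤ U ω t *ᵥ v := by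
  rw [← sub_nonneg, ← mulVec_sub] at huv ⊢
  exact hU.mulVec_nonneg_of_le hst huv

theorem norm_mulVec_le_norm_mulVec_abs (hU : IsCooperativeCocycle θ A U) (ω : Ω) {t : ℝ}
    (ht : 0 ≤ t) (u : ι → ℝ) : ‖U ω t *ᵥ u‖₂ ≤ ‖U ω t *ᵥ |u|‖₂ := by
  have hle {u v : ι → ℝ} (huv : u ≤ v) : U ω t *ᵥ u ≤ U ω t *ᵥ v :=
    hU.mulVec_mono_of_le ht (by simpa only [hU.zero_mulVec] using huv)
  refine norm_toLp_mono (abs_le'.2 ⟨hle (le_abs_self u), ?_⟩)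
  rw [← mulVec_neg]
  exact hle (neg_le_abs u)

end IsCooperativeCocycle

/-- The focusing condition: at time `1` the cocycle maps every nonzero nonnegative vector to one
comparable, up to the factor `κ`, to a multiple of `e`. -/
structure IsFocusing (U : Ω → ℝ → Matrix ι ι ℝ) (e : Ω → ι → ℝ) (κ : Ω → ℝ) : Prop where
  one_le : ∀ ω, 1 ≤ κ ω
  exists_between : ∀ ω u, 0 ≤ u → u ≠ 0 →
    ∃ β : ℝ, 0 < β ∧ β • e ω ≤ U ω 1 *ᵥ u ∧ U ω 1 *ᵥ u ≤ (κ ω * β) • e ω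

theorem IsFocusing.exists_comparison {e : Ω → ι → ℝ} {κ : Ω → ℝ} (hκ : IsFocusing U e κ)
    (hU : IsCooperativeCocycle θ A U) {ω : Ω} {s : ℝ} {u v : ι → ℝ} (hu₀ : u ≠ 0) (hv₀ : v ≠ 0)
    (hu : 0 ≤ U ω s *ᵥ u) (hv : 0 ≤ U ω s *ᵥ v) :
    ∃ c > 0, ∀ t, s + 1 ≤ t → U ω t *ᵥ u ≤ (κ (θ s ω) * c) • (U ω t *ᵥ v) ∧
      c • (U ω t *ᵥ v) ≤ κ (θ s ω) • (U ω t *ᵥ u) := by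
  have hκ₀ : 0 ≤ κ (θ s ω) := zero_le_one.trans (hκ.one_le _)
  obtain ⟨β, hβ, hβu, huβ⟩ := hκ.exists_between (θ s ω) _ hu (hU.mulVec_ne_zero ω s hu₀)
  obtain ⟨γ, hγ, hγv, hvγ⟩ := hκ.exists_between (θ s ω) _ hv (hU.mulVec_ne_zero ω s hv₀)
  have hcancel : β / γ * γ = β := div_mul_cancel₀ β hγ.ne'
  have hc : 0 < β / γ := div_pos hβ hγ
  rw [hU.mulVec_mulVec, add_comm] at hβu huβ hγv hvγ
  have hupper : U ω (s + 1) *ᵥ u ≤ (κ (θ s ω) * (β / γ)) • (U ω (s + 1) *ᵥ v) := by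
    refine huβ.trans (le_trans (le_of_eq ?_)
      (smul_le_smul_of_nonneg_left hγv (mul_nonneg hκ₀ hc.le)))
    rw [smul_smul, mul_assoc, hcancel]
  have hlower : (β / γ) • (U ω (s + 1) *ᵥ v) ≤ κ (θ s ω) • (U ω (s + 1) *ᵥ u) := by
    refine (smul_le_smul_of_nonneg_left hvγ hc.le).trans
      (le_trans (le_of_eq ?_) (smul_le_smul_of_nonneg_left hβu hκ₀))
    rw [smul_smul, smul_smul, mul_left_comm, hcancel]
  refine ⟨β / γ, hc, fun t ht => ?_⟩
  simp only [← mulVec_smul] at hupper hlower ⊢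
  exact ⟨hU.mulVec_mono_of_le ht hupper, hU.mulVec_mono_of_le ht hlower⟩

end Cocycle

/-! ### Entire nonnegative solutions -/

section EntireCone

variable {Ω ι : Type*} [Fintype ι]

/-- The cone of the initial values of those solutions that are nonnegative at all times, past and
future. -/
def entireCone (U : Ω → ℝ → Matrix ι ι ℝ) (ω : Ω) : Set (ι → ℝ) :=
  {v | ∀ t, 0 ≤ U ω t *ᵥ v}

/-- The entire nonnegative solutions over `ω` are all proportional to each other. -/
def HasUniqueEntireRay (U : Ω → ℝ → Matrix ι ι ℝ) (ω : Ω) : Prop :=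
  ∀ u ∈ entireCone U ω, ∀ v ∈ entireCone U ω, v ≠ 0 → ∃ c : ℝ, u = c • v

variable {θ : ℝ → Ω → Ω} {A : Ω → Matrix ι ι ℝ} {U : Ω → ℝ → Matrix ι ι ℝ} {ω : Ω} {u v : ι → ℝ}

theorem isClosed_entireCone : IsClosed (entireCone U ω) := by
  simp only [entireCone, Set.ofPred_forall]
  exact isClosed_iInter fun t => isClosed_le continuous_const
    (continuous_const.matrix_mulVec continuous_id)

theorem ne_zero_of_norm_toLp_eq_one (hv : ‖v‖₂ = 1) : v ≠ 0 := by
  rintro rfl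
  simp at hv

namespace IsLinearCocycle

theorem nonneg_of_mem_entireCone (hU : IsLinearCocycle θ A U) (hv : v ∈ entireCone U ω) :
    0 ≤ v :=
  hU.zero_mulVec ω v ▸ hv 0

theorem mulVec_mem_entireCone (hU : IsLinearCocycle θ A U) (hv : v ∈ entireCone U ω) (r : ℝ) :
    U ω r *ᵥ v ∈ entireCone U (θ r ω) := fun s => hU.mulVec_mulVec ω s r v ▸ hv (s + r)

theorem hasUniqueEntireRay_comp_flow (hU : IsLinearCocycle θ A U) (hω : HasUniqueEntireRay U ω)
    (r : ℝ) : HasUniqueEntireRay U (θ r ω) := by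
  have hback {v : ι → ℝ} (hv : v ∈ entireCone U (θ r ω)) :
      U (θ r ω) (-r) *ᵥ v ∈ entireCone U ω := by
    simpa only [hU.neg_apply_apply] using hU.mulVec_mem_entireCone hv (-r)
  intro u hu v hv hv₀
  obtain ⟨c, hc⟩ := hω _ (hback hu) _ (hback hv) (hU.mulVec_ne_zero _ _ hv₀)
  refine ⟨c, ?_⟩
  rw [← hU.mulVec_neg_mulVec ω r u, hc, mulVec_smul, hU.mulVec_neg_mulVec]

theorem eq_norm_smul_of_hasUniqueEntireRay (hU : IsLinearCocycle θ A U)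
    (hω : HasUniqueEntireRay U ω) (hu : u ∈ entireCone U ω) (hv : v ∈ entireCone U ω)
    (hv₁ : ‖v‖₂ = 1) : u = ‖u‖₂ • v := by
  have hv₀ : v ≠ 0 := ne_zero_of_norm_toLp_eq_one hv₁
  obtain ⟨c, rfl⟩ := hω u hu v hv hv₀
  obtain ⟨i, hi⟩ := Function.ne_iff.1 hv₀
  have hvi : 0 < v i := (hU.nonneg_of_mem_entireCone hv i).lt_of_ne' hi
  have hc : 0 ≤ c := nonneg_of_mul_nonneg_left (hU.nonneg_of_mem_entireCone hu i) hvi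
  rw [WithLp.toLp_smul, norm_smul, hv₁, mul_one, Real.norm_of_nonneg hc]

end IsLinearCocycle

namespace IsFocusing

variable {e : Ω → ι → ℝ} {κ : Ω → ℝ} {K : ℝ}

theorem harnack_of_mem_entireCone (hκ : IsFocusing U e κ) (hU : IsCooperativeCocycle θ A U)
    (hK : ∃ᶠ n : ℕ in atTop, κ (θ (-n) ω) ≤ K) (hu : u ∈ entireCone U ω) (hu₀ : u ≠ 0)
    (hv : v ∈ entireCone U ω) (hv₀ : v ≠ 0) (i : ι) (t : ℝ) :
    u i • (U ω t *ᵥ v) ≤ (K ^ 2 * v i) • (U ω t *ᵥ u) := by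
  obtain ⟨n, hnK, hn⟩ := (hK.and_eventually (tendsto_natCast_atTop_atTop.eventually_ge_atTop
    (1 - min 0 t))).exists
  have hn₀ : -(n : ℝ) + 1 ≤ 0 := by linarith [min_le_left 0 t]
  have hnt : -(n : ℝ) + 1 ≤ t := by linarith [min_le_right 0 t]
  have hK₀ : 0 ≤ K := zero_le_one.trans ((hκ.one_le _).trans hnK)
  obtain ⟨c, hc, hcomp⟩ := hκ.exists_comparison hU hu₀ hv₀ (hu (-n)) (hv (-n))
  have hvi := hU.nonneg_of_mem_entireCone hv i
  have huv : u i ≤ K * c * v i := by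
    have h := (hcomp 0 hn₀).1 i
    simp only [hU.zero_mulVec, Pi.smul_apply, smul_eq_mul] at h
    exact h.trans (by gcongr)
  calc u i • (U ω t *ᵥ v) ≤ (K * c * v i) • (U ω t *ᵥ v) :=
        smul_le_smul_of_nonneg_right huv (hv t)
    _ = (K * v i) • c • (U ω t *ᵥ v) := by rw [smul_smul, mul_right_comm]
    _ ≤ (K * v i) • K • (U ω t *ᵥ u) :=
        smul_le_smul_of_nonneg_left ((hcomp t hnt).2.trans
          (smul_le_smul_of_nonneg_right hnK (hu t))) (mul_nonneg hK₀ hvi)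
    _ = (K ^ 2 * v i) • (U ω t *ᵥ u) := by rw [smul_smul, sq, mul_right_comm]

theorem exists_sub_smul_mem_entireCone (hκ : IsFocusing U e κ) (hU : IsCooperativeCocycle θ A U)
    (hK : ∃ᶠ n : ℕ in atTop, κ (θ (-n) ω) ≤ K) (hu : u ∈ entireCone U ω) (hu₀ : u ≠ 0)
    (hv : v ∈ entireCone U ω) (hv₀ : v ≠ 0) : ∃ ε > (0 : ℝ), u - ε • v ∈ entireCone U ω := by
  have hKpos : 0 < K := by
    obtain ⟨n, hn⟩ := hK.exists
    exact zero_lt_one.trans_le ((hκ.one_le _).trans hn)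
  obtain ⟨i, hi⟩ := Function.ne_iff.1 hu₀
  obtain ⟨j, hj⟩ := Function.ne_iff.1 hv₀
  have hui : 0 < u i := (hU.nonneg_of_mem_entireCone hu i).lt_of_ne' hi
  have hvj : 0 < v j := (hU.nonneg_of_mem_entireCone hv j).lt_of_ne' hj
  have hharnack := hκ.harnack_of_mem_entireCone hU hK hu hu₀ hv hv₀ i
  have hvi : 0 < v i := by
    refine (hU.nonneg_of_mem_entireCone hv i).lt_of_ne' fun hvi => ?_
    have h := hharnack 0 j
    simp only [hU.zero_mulVec, hvi, Pi.zero_apply, mul_zero, zero_mul, Pi.smul_apply,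
      smul_eq_mul] at h
    exact h.not_gt (mul_pos hui hvj)
  have hpos : 0 < K ^ 2 * v i := by positivity
  refine ⟨u i / (K ^ 2 * v i), div_pos hui hpos, fun t => ?_⟩
  rw [mulVec_sub, mulVec_smul, sub_nonneg, div_eq_inv_mul, mul_smul]
  exact (inv_smul_le_iff_of_pos hpos).2 (hharnack t)

/-- Subtract from `u` the largest multiple of `v` that leaves it in the cone: by the Harnack
inequality a nonzero remainder would admit a further multiple. -/
theorem hasUniqueEntireRay (hκ : IsFocusing U e κ) (hU : IsCooperativeCocycle θ A U)
    (hK : ∃ᶠ n : ℕ in atTop, κ (θ (-n) ω) ≤ K) : HasUniqueEntireRay U ω := by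
  intro u hu v hv hv₀
  let T : Set ℝ := {c | u - c • v ∈ entireCone U ω}
  obtain ⟨i, hi⟩ := Function.ne_iff.1 hv₀
  have hvi : 0 < v i := (hU.nonneg_of_mem_entireCone hv i).lt_of_ne' hi
  have hT₀ : T.Nonempty := ⟨0, by simpa [T] using hu⟩
  have hbdd : BddAbove T := ⟨u i / v i, fun c hc => (le_div_iff₀ hvi).2 <|
    sub_nonneg.1 (hU.nonneg_of_mem_entireCone hc i)⟩
  have hclosed : IsClosed T := isClosed_entireCone.preimage (by fun_prop)
  refine ⟨sSup T, ?_⟩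
  by_contra hne
  obtain ⟨ε, hε, hmem⟩ := hκ.exists_sub_smul_mem_entireCone hU hK (hclosed.csSup_mem hT₀ hbdd)
    (sub_ne_zero.2 hne) hv hv₀
  rw [sub_sub, ← add_smul] at hmem
  exact (le_csSup hbdd hmem).not_gt (lt_add_of_pos_right _ hε)

end IsFocusing

end EntireCone

/-! ### The Floquet vector -/

section Floquet

variable {Ω ι : Type*} [Fintype ι]

/-- The Euclidean unit vector in the direction of `v`; the zero vector is left unchanged. -/
noncomputable def euclideanNormalize (v : ι → ℝ) : ι → ℝ := ‖v‖₂⁻¹ • v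

/-- The direction over `ω` of the solution started at time `-n` from the vector of ones. -/
noncomputable def pullbackDirection (θ : ℝ → Ω → Ω) (U : Ω → ℝ → Matrix ι ι ℝ) (ω : Ω) (n : ℕ) :
    ι → ℝ :=
  euclideanNormalize (U (θ (-n) ω) n *ᵥ 1)

open Classical in
/-- The limit of the pullback directions, which spans the principal Floquet space; where the limit
does not exist, an arbitrary positive unit vector. -/
noncomputable def floquetVector (θ : ℝ → Ω → Ω) (U : Ω → ℝ → Matrix ι ι ℝ) (ω : Ω) : ι → ℝ :=
  if ∃ v, Tendsto (pullbackDirection θ U ω) atTop (𝓝 v) then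
    limUnder atTop (pullbackDirection θ U ω)
  else euclideanNormalize 1

theorem norm_euclideanNormalize {v : ι → ℝ} (hv : v ≠ 0) : ‖euclideanNormalize v‖₂ = 1 := by
  have hv₀ : ‖v‖₂ ≠ 0 := norm_ne_zero_iff.2 ((WithLp.toLp_eq_zero 2).not.2 hv)
  rw [euclideanNormalize, WithLp.toLp_smul, norm_smul, norm_inv, norm_norm, inv_mul_cancel₀ hv₀]

theorem euclideanNormalize_nonneg {v : ι → ℝ} (hv : 0 ≤ v) : 0 ≤ euclideanNormalize v :=
  smul_nonneg (inv_nonneg.2 (norm_nonneg _)) hv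

theorem continuous_norm_toLp : Continuous fun v : ι → ℝ => ‖v‖₂ :=
  (PiLp.continuous_toLp 2 _).norm

theorem isCompact_setOf_norm_toLp_eq_one : IsCompact {v : ι → ℝ | ‖v‖₂ = 1} := by
  have himage : {v : ι → ℝ | ‖v‖₂ = 1} =
      WithLp.ofLp '' Metric.sphere (0 : EuclideanSpace ℝ ι) 1 := by
    ext v
    exact ⟨fun hv => ⟨WithLp.toLp 2 v, mem_sphere_zero_iff_norm.2 hv, rfl⟩, fun ⟨x, hx, hxv⟩ =>
      hxv ▸ mem_sphere_zero_iff_norm.1 hx⟩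
  rw [himage]
  exact (isCompact_sphere _ _).image (PiLp.continuous_ofLp 2 _)

variable {θ : ℝ → Ω → Ω} {A : Ω → Matrix ι ι ℝ} {U : Ω → ℝ → Matrix ι ι ℝ} {ω : Ω}

theorem floquetVector_mem_of_isClosed {S : Set (ι → ℝ)} (hS : IsClosed S)
    (hpull : ∀ n, pullbackDirection θ U ω n ∈ S) (hone : euclideanNormalize 1 ∈ S) :
    floquetVector θ U ω ∈ S := by
  rw [floquetVector]
  split_ifs with h
  · exact hS.mem_of_tendsto (tendsto_nhds_limUnder h) (Eventually.of_forall hpull)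
  · exact hone

theorem IsLinearCocycle.norm_pullbackDirection [Nonempty ι] (hU : IsLinearCocycle θ A U) (ω : Ω)
    (n : ℕ) : ‖pullbackDirection θ U ω n‖₂ = 1 :=
  norm_euclideanNormalize (hU.mulVec_ne_zero _ _ one_ne_zero)

theorem IsLinearCocycle.measurable_floquetVector [MeasurableSpace Ω] (hU : IsLinearCocycle θ A U)
    (hθ : Measurable fun p : ℝ × Ω => θ p.1 p.2) (hA : ∀ i j, Measurable fun ω => A ω i j) :
    Measurable (floquetVector θ U) := by
  have hpull (n : ℕ) : Measurable fun ω => pullbackDirection θ U ω n := by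
    have hmulVec : Measurable fun ω => U (θ (-n) ω) n *ᵥ 1 :=
      (hU.measurable_mulVec hθ hA 1 n.cast_nonneg).comp (hθ.comp measurable_prodMk_left)
    exact (continuous_norm_toLp.measurable.comp hmulVec).inv.smul hmulVec
  exact .ite (measurableSet_exists_tendsto hpull)
    (StronglyMeasurable.limUnder fun n => (hpull n).stronglyMeasurable).measurable
    measurable_const

namespace IsCooperativeCocycle

theorem floquetVector_nonneg (hU : IsCooperativeCocycle θ A U) (ω : Ω) :
    0 ≤ floquetVector θ U ω :=
  floquetVector_mem_of_isClosed isClosed_Ici (fun n => euclideanNormalize_nonneg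
    (hU.mulVec_nonneg _ n.cast_nonneg zero_le_one)) (euclideanNormalize_nonneg zero_le_one)

theorem mem_entireCone_of_mapClusterPt (hU : IsCooperativeCocycle θ A U) {v : ι → ℝ}
    (hv : MapClusterPt v atTop (pullbackDirection θ U ω)) : v ∈ entireCone U ω := by
  intro t
  have hclosed : IsClosed {v : ι → ℝ | 0 ≤ U ω t *ᵥ v} :=
    isClosed_le continuous_const (continuous_const.matrix_mulVec continuous_id)
  have hpull : ∀ᶠ n : ℕ in atTop, pullbackDirection θ U ω n ∈ {v : ι → ℝ | 0 ≤ U ω t *ᵥ v} := by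
    filter_upwards [(tendsto_natCast_atTop_atTop (R := ℝ)).eventually_ge_atTop (-t)] with n hn
    have hstart : U ω (-(n : ℝ)) *ᵥ (U (θ (-(n : ℝ)) ω) n *ᵥ 1) = 1 := by
      simpa only [neg_neg] using hU.mulVec_neg_mulVec ω (-(n : ℝ)) 1
    refine hU.mulVec_nonneg_of_le (neg_le.1 hn) ?_
    rw [pullbackDirection, euclideanNormalize, mulVec_smul, hstart]
    exact smul_nonneg (inv_nonneg.2 (norm_nonneg _)) zero_le_one
  exact hclosed.mem_of_mapClusterPt hv hpull

variable [Nonempty ι]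

theorem norm_floquetVector (hU : IsCooperativeCocycle θ A U) (ω : Ω) :
    ‖floquetVector θ U ω‖₂ = 1 :=
  floquetVector_mem_of_isClosed isCompact_setOf_norm_toLp_eq_one.isClosed
    (hU.norm_pullbackDirection ω) (norm_euclideanNormalize one_ne_zero)

theorem floquetVector_mem_entireCone (hU : IsCooperativeCocycle θ A U)
    (hω : HasUniqueEntireRay U ω) : floquetVector θ U ω ∈ entireCone U ω := by
  have hunit : ∀ᶠ n in atTop, pullbackDirection θ U ω n ∈ {v : ι → ℝ | ‖v‖₂ = 1} :=
    Eventually.of_forall (hU.norm_pullbackDirection ω)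
  obtain ⟨v, hv₁, hv⟩ := isCompact_setOf_norm_toLp_eq_one.exists_mapClusterPt
    (tendsto_principal.2 hunit)
  have hlim : Tendsto (pullbackDirection θ U ω) atTop (𝓝 v) := by
    refine isCompact_setOf_norm_toLp_eq_one.tendsto_nhds_of_unique_mapClusterPt hunit
      fun w hw₁ hw => ?_
    have hwv := hU.eq_norm_smul_of_hasUniqueEntireRay hω (hU.mem_entireCone_of_mapClusterPt hw)
      (hU.mem_entireCone_of_mapClusterPt hv) hv₁
    rwa [hw₁, one_smul] at hwv
  rw [floquetVector, if_pos ⟨v, hlim⟩, hlim.limUnder_eq]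
  exact hU.mem_entireCone_of_mapClusterPt hv

theorem mulVec_floquetVector (hU : IsCooperativeCocycle θ A U) (hω : HasUniqueEntireRay U ω)
    (t : ℝ) : U ω t *ᵥ floquetVector θ U ω =
      ‖U ω t *ᵥ floquetVector θ U ω‖₂ • floquetVector θ U (θ t ω) :=
  have hωt := hU.hasUniqueEntireRay_comp_flow hω t
  hU.eq_norm_smul_of_hasUniqueEntireRay hωt
    (hU.mulVec_mem_entireCone (hU.floquetVector_mem_entireCone hω) t)
    (hU.floquetVector_mem_entireCone hωt) (hU.norm_floquetVector _)

end IsCooperativeCocycle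

end Floquet

section FloquetRate

variable {Ω ι : Type*} [Fintype ι]

/-- The logarithmic derivative `⟨A w, w⟩` of the norm of the Floquet solution; its mean is the
principal Lyapunov exponent. -/
noncomputable def floquetRate (θ : ℝ → Ω → Ω) (A : Ω → Matrix ι ι ℝ) (U : Ω → ℝ → Matrix ι ι ℝ)
    (ω : Ω) : ℝ :=
  (A ω *ᵥ floquetVector θ U ω) ⬝ᵥ floquetVector θ U ω

theorem mulVec_dotProduct_self_le_of_le {M : Matrix ι ι ℝ} {c : ℝ} (hM : ∀ i j, M i j ≤ c)
    {v : ι → ℝ} (hv : 0 ≤ v) : (M *ᵥ v) ⬝ᵥ v ≤ |c| * (Fintype.card ι * ‖v‖₂ ^ 2) :=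
  calc (M *ᵥ v) ⬝ᵥ v = ∑ i, ∑ j, M i j * (v j * v i) := by
        simp only [dotProduct, mulVec, Finset.sum_mul, mul_assoc]
    _ ≤ ∑ i, ∑ j, |c| * (v j * v i) := Finset.sum_le_sum fun i _ => Finset.sum_le_sum fun j _ =>
        mul_le_mul_of_nonneg_right ((hM i j).trans (le_abs_self c)) (mul_nonneg (hv j) (hv i))
    _ = |c| * (∑ i, v i) ^ 2 := by simp only [← Finset.mul_sum, ← Finset.sum_mul, sq]
    _ ≤ |c| * (Fintype.card ι * ‖v‖₂ ^ 2) := by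
        rw [norm_toLp_sq]
        exact mul_le_mul_of_nonneg_left sq_sum_le_card_mul_sum_sq (abs_nonneg c)

variable {θ : ℝ → Ω → Ω} {A : Ω → Matrix ι ι ℝ} {U : Ω → ℝ → Matrix ι ι ℝ}

theorem IsLinearCocycle.measurable_floquetRate [MeasurableSpace Ω] (hU : IsLinearCocycle θ A U)
    (hθ : Measurable fun p : ℝ × Ω => θ p.1 p.2) (hA : ∀ i j, Measurable fun ω => A ω i j) :
    Measurable (floquetRate θ A U) := by
  have hw (i : ι) : Measurable fun ω => floquetVector θ U ω i :=
    (measurable_pi_apply i).comp (hU.measurable_floquetVector hθ hA)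
  exact Finset.measurable_fun_sum _ fun i _ =>
    (Finset.measurable_fun_sum _ fun j _ => (hA i j).mul (hw j)).mul (hw i)

namespace IsCooperativeCocycle

variable [Nonempty ι]

theorem locallyIntegrableAlongOrbits_floquetRate [MeasurableSpace Ω]
    (hU : IsCooperativeCocycle θ A U) (hθ : Measurable fun p : ℝ × Ω => θ p.1 p.2)
    (hA : ∀ i j, Measurable fun ω => A ω i j) :
    LocallyIntegrableAlongOrbits θ (floquetRate θ A U) := fun ω a b => by
  have hle (ω : Ω) : |floquetRate θ A U ω| ≤ absEntrySum (A ω) := by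
    simpa only [floquetRate, hU.norm_floquetVector, one_pow, mul_one] using
      abs_mulVec_dotProduct_self_le (A ω) (floquetVector θ U ω)
  exact ((hU.isLocallyIntegrableMatrix ω).absEntrySum a b).mono_fun'
    ((hU.measurable_floquetRate hθ hA).comp (hθ.comp measurable_prodMk_right)).aestronglyMeasurable
    (Eventually.of_forall fun t => hle (θ t ω))

theorem integrable_max_floquetRate [MeasurableSpace Ω] {μ : Measure Ω}
    (hU : IsCooperativeCocycle θ A U) (hθ : Measurable fun p : ℝ × Ω => θ p.1 p.2)
    (hA : ∀ i j, Measurable fun ω => A ω i j) {g : Ω → ℝ} (hg : Integrable g μ)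
    (hAg : ∀ ω i j, A ω i j ≤ g ω) : Integrable (fun ω => max (floquetRate θ A U ω) 0) μ := by
  refine (hg.abs.mul_const (Fintype.card ι : ℝ)).mono'
    ((hU.measurable_floquetRate hθ hA).max measurable_const).aestronglyMeasurable
    (Eventually.of_forall fun ω => ?_)
  rw [Real.norm_of_nonneg (le_max_right _ _)]
  refine max_le ?_ (by positivity)
  simpa only [floquetRate, hU.norm_floquetVector, one_pow, mul_one] using
    mulVec_dotProduct_self_le_of_le (hAg ω) (hU.floquetVector_nonneg ω)

theorem log_norm_mulVec_floquetVector (hU : IsCooperativeCocycle θ A U) {ω : Ω}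
    (hω : HasUniqueEntireRay U ω) (hf : LocallyIntegrableAlongOrbits θ (floquetRate θ A U))
    (t : ℝ) : Real.log ‖U ω t *ᵥ floquetVector θ U ω‖₂ =
      orbitIntegral θ (floquetRate θ A U) ω t := by
  have hderiv (s : ℝ) : 2 * ((A (θ s ω) *ᵥ (U ω s *ᵥ floquetVector θ U ω)) ⬝ᵥ
      (U ω s *ᵥ floquetVector θ U ω)) =
      2 * floquetRate θ A U (θ s ω) * ‖U ω s *ᵥ floquetVector θ U ω‖₂ ^ 2 := by
    conv_lhs => rw [hU.mulVec_floquetVector hω s]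
    rw [mulVec_smul, smul_dotProduct, dotProduct_smul, smul_eq_mul, smul_eq_mul, floquetRate]
    ring
  have hnormSq := (hU.isCaratheodorySolution ω (floquetVector θ U ω)).normSq_isIndefiniteIntegral
  simp only [hderiv] at hnormSq
  have hexp := hnormSq.eq_mul_exp (fun a b => (hf ω a b).const_mul 2) t
  rw [hU.zero_mulVec, hU.norm_floquetVector, one_pow, one_mul,
    intervalIntegral.integral_const_mul] at hexp
  have hlog := congrArg Real.log hexp
  rw [Real.log_exp, Real.log_pow] at hlog
  exact mul_left_cancel₀ two_ne_zero hlog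

end IsCooperativeCocycle

end FloquetRate

/-! ### The principal Lyapunov exponent -/

section PrincipalExponent

variable {Ω ι : Type*} [Fintype ι] {θ : ℝ → Ω → Ω} {A : Ω → Matrix ι ι ℝ}
  {U : Ω → ℝ → Matrix ι ι ℝ}

theorem IsFocusing.exists_log_norm_mulVec_le {e : Ω → ι → ℝ} {κ : Ω → ℝ} (hκ : IsFocusing U e κ)
    (hU : IsCooperativeCocycle θ A U) (ω : Ω) {u v : ι → ℝ} (hu₀ : u ≠ 0) (hv₀ : v ≠ 0)
    (hv : 0 ≤ v) :
    ∃ C, ∀ t, 1 ≤ t → Real.log ‖U ω t *ᵥ u‖₂ ≤ Real.log ‖U ω t *ᵥ v‖₂ + C := by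
  have hnorm_pos (t : ℝ) {v : ι → ℝ} (hv₀ : v ≠ 0) : 0 < ‖U ω t *ᵥ v‖₂ :=
    norm_pos_iff.2 ((WithLp.toLp_eq_zero 2).not.2 (hU.mulVec_ne_zero ω t hv₀))
  have habs : |u| ≠ 0 := fun h => hu₀ (funext fun i => abs_eq_zero.1 (congrFun h i))
  obtain ⟨c, hc, hcomp⟩ := hκ.exists_comparison hU (s := 0) habs hv₀
    ((hU.zero_mulVec ω _).symm ▸ abs_nonneg u) ((hU.zero_mulVec ω v).symm ▸ hv)
  have hκc : 0 < κ (θ 0 ω) * c := mul_pos (zero_lt_one.trans_le (hκ.one_le _)) hc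
  refine ⟨Real.log (κ (θ 0 ω) * c), fun t ht => ?_⟩
  have ht₀ : 0 ≤ t := zero_le_one.trans ht
  have hle : ‖U ω t *ᵥ u‖₂ ≤ κ (θ 0 ω) * c * ‖U ω t *ᵥ v‖₂ :=
    calc ‖U ω t *ᵥ u‖₂ ≤ ‖U ω t *ᵥ |u|‖₂ := hU.norm_mulVec_le_norm_mulVec_abs ω ht₀ u
      _ ≤ ‖(κ (θ 0 ω) * c) • (U ω t *ᵥ v)‖₂ := by
          refine norm_toLp_mono ?_
          rw [abs_of_nonneg (hU.mulVec_nonneg ω ht₀ (abs_nonneg u))]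
          exact (hcomp t (by rwa [zero_add])).1
      _ = κ (θ 0 ω) * c * ‖U ω t *ᵥ v‖₂ := by
          rw [WithLp.toLp_smul, norm_smul, Real.norm_of_nonneg hκc.le]
  rw [add_comm, ← Real.log_mul hκc.ne' (hnorm_pos t hv₀).ne']
  exact Real.log_le_log (hnorm_pos t hu₀) hle

end PrincipalExponent

theorem erealIntegral_ne_top {Ω : Type*} [MeasurableSpace Ω] (f : Ω → ℝ) (μ : Measure Ω) :
    erealIntegral f μ ≠ ⊤ := by
  rw [erealIntegral]
  split_ifs
  exacts [EReal.coe_ne_top _, bot_ne_top]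

theorem stmt_16_general {Ω ι : Type*} [Fintype ι] [Nonempty ι] [MeasurableSpace Ω]
    (ℙ : Measure Ω) [IsProbabilityMeasure ℙ] {θ : ℝ → Ω → Ω} (hθ : IsErgodicFlow θ ℙ)
    {A : Ω → Matrix ι ι ℝ} (hA : ∀ i j, Measurable fun ω => A ω i j)
    {U : Ω → ℝ → Matrix ι ι ℝ} (hU : IsCooperativeCocycle θ A U)
    {g : Ω → ℝ} (hg : Integrable g ℙ) (hAg : ∀ ω i j, A ω i j ≤ g ω)
    {e : Ω → ι → ℝ} {κ : Ω → ℝ} (hκm : Measurable κ) (hκ : IsFocusing U e κ) :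
    ∃ Ω₁ : Set Ω, MeasurableSet Ω₁ ∧ (∀ t ω, ω ∈ Ω₁ ↔ θ t ω ∈ Ω₁) ∧ ℙ Ω₁ = 1 ∧
      ∃ w : Ω → ι → ℝ, Measurable w ∧ (∀ ω, 0 ≤ w ω ∧ ‖w ω‖₂ = 1) ∧
        (∀ ω ∈ Ω₁, ∀ t, U ω t *ᵥ w ω = ‖U ω t *ᵥ w ω‖₂ • w (θ t ω)) ∧
        (∀ ω ∈ Ω₁, Tendsto
          (fun t : ℝ => ((t⁻¹ : ℝ) : EReal) * (Real.log ‖U ω t *ᵥ w ω‖₂ : EReal)) atTop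
          (𝓝 (erealIntegral (fun ω => (A ω *ᵥ w ω) ⬝ᵥ w ω) ℙ))) ∧
        ∀ ω ∈ Ω₁, ∀ u ≠ 0, limsup
          (fun t : ℝ => ((t⁻¹ : ℝ) : EReal) * (Real.log ‖U ω t *ᵥ u‖₂ : EReal)) atTop ≤
            erealIntegral (fun ω => (A ω *ᵥ w ω) ⬝ᵥ w ω) ℙ := by
  let w := floquetVector θ U
  let f := floquetRate θ A U
  have hf : LocallyIntegrableAlongOrbits θ f :=
    hU.locallyIntegrableAlongOrbits_floquetRate hθ.measurable_uncurry hA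
  obtain ⟨Ω₁, hΩm, hΩinv, hΩae, hΩ⟩ := hθ.exists_measurableSet_invariant_of_ae
    (P := fun ω => HasUniqueEntireRay U ω ∧ HasGrowthRate (orbitIntegral θ f ω) (erealIntegral f ℙ))
    (by
      filter_upwards [hθ.ae_exists_frequently_neg_natCast_le hκm, hθ.ae_hasGrowthRate_orbitIntegral
        (hU.measurable_floquetRate hθ.measurable_uncurry hA) hf
        (hU.integrable_max_floquetRate hθ.measurable_uncurry hA hg hAg)] with ω ⟨K, hK⟩ hrate
      exact ⟨hκ.hasUniqueEntireRay hU hK, hrate⟩)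
    fun t ω hω => ⟨hU.hasUniqueEntireRay_comp_flow hω.1 t,
      hω.2.orbitIntegral_comp_flow hθ.toIsFlow hf t⟩
  have hrate (ω) (hω : ω ∈ Ω₁) :
      HasGrowthRate (fun t => Real.log ‖U ω t *ᵥ w ω‖₂) (erealIntegral f ℙ) := by
    simpa only [w, hU.log_norm_mulVec_floquetVector (hΩ ω hω).1 hf] using (hΩ ω hω).2
  refine ⟨Ω₁, hΩm, hΩinv, (mem_ae_iff_prob_eq_one hΩm).1 hΩae, w,
    hU.measurable_floquetVector hθ.measurable_uncurry hA,
    fun ω => ⟨hU.floquetVector_nonneg ω, hU.norm_floquetVector ω⟩,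
    fun ω hω => hU.mulVec_floquetVector (hΩ ω hω).1, fun ω hω => (hrate ω hω).tendsto_inv_mul,
    fun ω hω u hu => ?_⟩
  have hw₀ : w ω ≠ 0 := ne_zero_of_norm_toLp_eq_one (hU.norm_floquetVector ω)
  obtain ⟨C, hC⟩ := hκ.exists_log_norm_mulVec_le hU ω hu hw₀ (hU.floquetVector_nonneg ω)
  exact ((hrate ω hω).le.of_le_add_const ((eventually_ge_atTop 1).mono hC)).limsup_inv_mul_le

theorem enorm'_eq_norm {N : ℕ} (u : Fin N → ℝ) : enorm' u = ‖u‖₂ := by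
  rw [enorm', ← norm_toLp_sq, Real.sqrt_sq (norm_nonneg _)]

theorem enorm'_mulVec_le_eopNorm {N : ℕ} (M : Matrix (Fin N) (Fin N) ℝ) {u : Fin N → ℝ}
    (hu : enorm' u ≤ 1) : enorm' (M *ᵥ u) ≤ eopNorm M := by
  refine le_csSup ⟨‖toEuclideanCLM (𝕜 := ℝ) M‖, ?_⟩ ⟨u, hu, rfl⟩
  rintro _ ⟨v, hv, rfl⟩
  rw [enorm'_eq_norm] at hv ⊢
  exact (toEuclideanCLM (𝕜 := ℝ) M).unit_le_opNorm _ hv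

theorem abs_apply_le_eopNorm {N : ℕ} (M : Matrix (Fin N) (Fin N) ℝ) (i j : Fin N) :
    |M i j| ≤ eopNorm M := by
  have hunit : enorm' (Pi.single j 1 : Fin N → ℝ) ≤ 1 := by
    rw [enorm'_eq_norm]
    exact ((PiLp.norm_single 2 (fun _ : Fin N => ℝ) j 1).trans norm_one).le
  have hcol := enorm'_mulVec_le_eopNorm M hunit
  rw [mulVec_single_one, enorm'_eq_norm] at hcol
  exact (PiLp.norm_apply_le (WithLp.toLp 2 (M.col j)) i).trans hcol

theorem isLocallyIntegrableMatrix_of_eopNorm {N : ℕ} {B : ℝ → Matrix (Fin N) (Fin N) ℝ}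
    (hBm : ∀ i j, Measurable fun t => B t i j)
    (hB : ∀ a b, IntervalIntegrable (fun t => eopNorm (B t)) volume a b) :
    IsLocallyIntegrableMatrix B := fun i j a b =>
  (hB a b).mono_fun' (hBm i j).aestronglyMeasurable
    (Eventually.of_forall fun t => abs_apply_le_eopNorm (B t) i j)

/-- Generalized principal Floquet subspaces and generalized principal
Lyapunov exponent for a random cooperative linear ODE system satisfying the focusing
conditions; the exponent equals `∫ ⟨A(ω)w(ω), w(ω)⟩ dℙ(ω) ∈ [−∞, ∞)`. -/
theorem stmt_16 {N : ℕ} (hN : 2 ≤ N)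
    {Ω : Type*} [MeasurableSpace Ω] (ℙ : Measure Ω) [IsProbabilityMeasure ℙ]
    [ℙ.IsComplete]
    (θ : ℝ → Ω → Ω) (hθ0 : θ 0 = id)
    (hθadd : ∀ s t : ℝ, θ (s + t) = θ s ∘ θ t)
    (hθjm : Measurable fun p : ℝ × Ω => θ p.1 p.2)
    (hθmp : ∀ t, MeasurePreserving (θ t) ℙ ℙ)
    (hθerg : ∀ F : Set Ω, MeasurableSet F → (∀ t, θ t ⁻¹' F = F) →
      ℙ F = 0 ∨ ℙ F = 1)
    (A : Ω → Matrix (Fin N) (Fin N) ℝ)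
    (hAmeas : ∀ i j, Measurable fun ω => A ω i j)
    (hAloc : ∀ ω, ∀ a c : ℝ,
      IntervalIntegrable (fun t => eopNorm (A (θ t ω))) volume a c)
    (U : Ω → ℝ → Matrix (Fin N) (Fin N) ℝ)
    (hUcont : ∀ ω (u0 : Fin N → ℝ), Continuous fun t : ℝ => (U ω t).mulVec u0)
    (hUeq : ∀ ω (u0 : Fin N → ℝ) (t : ℝ),
      (U ω t).mulVec u0 = u0 + ∫ s in (0:ℝ)..t, (A (θ s ω)).mulVec ((U ω s).mulVec u0))
    -- (O1) cooperativity
    (hO1 : ∀ ω (i j : Fin N), i ≠ j → 0 ≤ A ω i j)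
    -- (O2) integrability
    (hO2 : Integrable (fun ω => ⨆ i, ⨆ j, A ω i j) ℙ)
    -- focusing conditions (B3) and (B3)*
    (e estar : Fin N → ℝ) (he : ∀ i, 0 ≤ e i) (hestar : ∀ i, 0 ≤ estar i)
    (hen : enorm' e = 1) (hestarn : enorm' estar = 1)
    (κ κstar : Ω → ℝ) (hκmeas : Measurable κ) (hκstarmeas : Measurable κstar)
    (hκ1 : ∀ ω, 1 ≤ κ ω) (hκstar1 : ∀ ω, 1 ≤ κstar ω)
    (hκint : Integrable (fun ω => lnplus (Real.log (κ ω))) ℙ)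
    (hκstarint : Integrable (fun ω => lnplus (Real.log (κstar ω))) ℙ)
    (hfocus : ∀ ω, ∀ u : Fin N → ℝ, (∀ i, 0 ≤ u i) → u ≠ 0 →
      ∃ β : ℝ, 0 < β ∧ ∀ i, β * e i ≤ (U ω 1).mulVec u i ∧
        (U ω 1).mulVec u i ≤ κ ω * (β * e i))
    (hfocusstar : ∀ ω, ∀ u : Fin N → ℝ, (∀ i, 0 ≤ u i) → u ≠ 0 →
      ∃ βstar : ℝ, 0 < βstar ∧
        ∀ i, βstar * estar i ≤ (U (θ (-1) ω) 1).transpose.mulVec u i ∧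
          (U (θ (-1) ω) 1).transpose.mulVec u i ≤ κstar ω * (βstar * estar i)) :
    ∃ Ω1 : Set Ω, MeasurableSet Ω1 ∧ (∀ t ω, ω ∈ Ω1 ↔ θ t ω ∈ Ω1) ∧ ℙ Ω1 = 1 ∧
      ∃ w : Ω → Fin N → ℝ, Measurable w ∧
        (∀ ω ∈ Ω1, (∀ i, 0 ≤ w ω i) ∧ w ω ≠ 0 ∧ enorm' (w ω) = 1) ∧
        -- (i)
        (∀ ω ∈ Ω1, ∀ t : ℝ, 0 ≤ t →
          (U ω t).mulVec (w ω) = enorm' ((U ω t).mulVec (w ω)) • w (θ t ω)) ∧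
        ∃ lam : EReal, lam ≠ ⊤ ∧
          -- (ii): λ̃₁ = ∫ ⟨A(ω)w(ω), w(ω)⟩ dℙ(ω) ∈ [−∞, ∞)
          ((Integrable (fun ω => ∑ i, (A ω).mulVec (w ω) i * w ω i) ℙ →
            lam = ((∫ ω, (∑ i, (A ω).mulVec (w ω) i * w ω i) ∂ℙ : ℝ) : EReal)) ∧
           (¬ Integrable (fun ω => ∑ i, (A ω).mulVec (w ω) i * w ω i) ℙ →
            lam = ⊥)) ∧
          (∀ ω ∈ Ω1, Tendsto (fun t : ℝ =>
              ((t⁻¹ * Real.log (enorm' ((U ω t).mulVec (w ω)))) : EReal))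
            atTop (nhds lam)) ∧
          -- (iii)
          (∀ ω ∈ Ω1, ∀ u : Fin N → ℝ, u ≠ 0 →
            limsup (fun t : ℝ =>
              ((t⁻¹ * Real.log (enorm' ((U ω t).mulVec u))) : EReal)) atTop ≤ lam) := by
  have : Nonempty (Fin N) := ⟨⟨0, by lia⟩⟩
  have hθ : IsErgodicFlow θ ℙ :=
    ⟨⟨⟨congrFun hθ0, fun s t => congrFun (hθadd s t)⟩, hθjm, hθmp⟩, hθerg⟩
  have hB (ω : Ω) : IsLocallyIntegrableMatrix fun t => A (θ t ω) :=
    isLocallyIntegrableMatrix_of_eopNorm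
      (fun i j => (hAmeas i j).comp (hθjm.comp measurable_prodMk_right)) (hAloc ω)
  have hU : IsCooperativeCocycle θ A U :=
    ⟨.of_eq_add_integral hθ.toIsFlow hB hUcont hUeq, hO1⟩
  have hκ : IsFocusing U (fun _ => e) κ := ⟨hκ1, fun ω u hu hu₀ =>
    (hfocus ω u hu hu₀).imp fun β hβ => ⟨hβ.1, fun i => (hβ.2 i).1, fun i =>
      (hβ.2 i).2.trans_eq (mul_assoc _ _ _).symm⟩⟩
  obtain ⟨Ω₁, hΩm, hΩinv, hΩ, w, hwm, hw, hmul, hlim, hsup⟩ := stmt_16_general ℙ hθ hAmeas hU hO2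
    (fun ω i j => (le_ciSup (Set.finite_range fun j => A ω i j).bddAbove j).trans
      (le_ciSup (Set.finite_range fun i => ⨆ j, A ω i j).bddAbove i)) hκmeas hκ
  have hw₀ (ω : Ω) : w ω ≠ 0 := ne_zero_of_norm_toLp_eq_one (hw ω).2
  simp only [← enorm'_eq_norm] at hw hmul hlim hsup
  exact ⟨Ω₁, hΩm, hΩinv, hΩ, w, hwm, fun ω _ => ⟨(hw ω).1, hw₀ ω, (hw ω).2⟩,
    fun ω hω t _ => hmul ω hω t, _, erealIntegral_ne_top _ _,
    ⟨fun h => if_pos h, fun h => if_neg h⟩, hlim, hsup⟩
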